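/- arXiv:1304.0562 — 3 statements merged into one kernel-verified Lean document; each statement's English description precedes it below -/
import Mathlib

section
/- For every c > 0 there exists a constant C, depending only on c, such that for every a > 0, all x, y ∈ (0,a) and every t with 0 < t ≤ a²: ∫_0^t ∫_0^a p^a_s(x,z)·e^{−cz}·p^a_{t−s}(z,y) dz ds ≤ C·p^a_t(x,y). -/
open Real MeasureTheory Set Filter

/-- Transition density of Brownian motion killed upon exiting `(0,a)`. -/
noncomputable def pker (a t x y : ℝ) : ℝ :=
  (2/a) * ∑' n : ℕ, Real.exp (-(π^2) * ((n : ℝ) + 1)^2 * t / (2 * a^2)) *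
    Real.sin (π * ((n : ℝ) + 1) * x / a) * Real.sin (π * ((n : ℝ) + 1) * y / a)

/-!
Up to absolute constants, `pker a t x y` is, for `t ≤ a²`, the free heat kernel times a factor
`min 1 (x * y / t)` for the endpoint `0` and its mirror image for the endpoint `a`: for small
`t / a²` this is read off the method of images, and otherwise off the first term of the sine
series. Completing the square turns a product of two such profiles into the profile of `(x, y)`
times a Brownian bridge density, and wherever the boundary factors of the product exceed those of
`(x, y)` the Gaussian of the bridge is small enough to compensate. Thus the density at `z` of the
taboo bridge is at most `z` times multiples of the derivatives in `s` of `2 * arctan (√s / r)`,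
where `r` runs over the distances of the points to `0` and `a`, and of their time reversals.
Integrated over time, these are bounded independently of `a`, `t`, `x`, `y`: the expected local
time of the bridge at `z` is `O(z)`. Integrating against the weight `exp (-c * z)` costs only
`∫ z * exp (-c * z) ≤ 1 / c ^ 2`.
-/

section ExponentialBounds

lemma one_sub_exp_neg_nonneg {w : ℝ} (hw : 0 ≤ w) : 0 ≤ 1 - exp (-w) :=
  sub_nonneg.2 (exp_le_one_iff.2 (neg_nonpos.2 hw))

lemma one_sub_exp_neg_le (w : ℝ) : 1 - exp (-w) ≤ w := by
  linarith [one_sub_le_exp_neg w]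

lemma mul_exp_neg_le_one_sub_exp_neg (w : ℝ) : w * exp (-w) ≤ 1 - exp (-w) := by
  have h : (w + 1) * exp (-w) ≤ exp w * exp (-w) := by
    gcongr
    exact add_one_le_exp w
  rw [← exp_add, add_neg_cancel, exp_zero] at h
  linarith

lemma mul_exp_neg_le_one (w : ℝ) : w * exp (-w) ≤ 1 := by
  linarith [mul_exp_neg_le_one_sub_exp_neg w, exp_pos (-w)]

lemma one_sub_exp_neg_mul_le {l : ℝ} (hl : 1 ≤ l) (w : ℝ) :
    1 - exp (-(l * w)) ≤ l * (1 - exp (-w)) := by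
  have bernoulli : 1 + l * (exp (-w) - 1) ≤ (1 + (exp (-w) - 1)) ^ l :=
    one_add_mul_self_le_rpow_one_add (by linarith [exp_pos (-w)]) hl
  rw [add_sub_cancel, ← exp_mul, show -w * l = -(l * w) by ring] at bernoulli
  linarith

lemma exp_neg_natCast_le (n : ℕ) : exp (-(n : ℝ)) ≤ (3 / 8) ^ n := by
  have h : exp (-1) ≤ 3 / 8 := exp_neg_one_lt_d9.le.trans (by norm_num)
  calc exp (-(n : ℝ)) = exp (-1) ^ n := by rw [← exp_nat_mul, mul_neg_one]
    _ ≤ (3 / 8) ^ n := by gcongr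

lemma exp_neg_natCast_le_half_pow (n : ℕ) : exp (-(n : ℝ)) ≤ (1 / 2) ^ n :=
  (exp_neg_natCast_le n).trans (pow_le_pow_left₀ (by norm_num) (by norm_num) n)

/-- With `P = exp (-A)` and `Q = exp (-B)`, the middle quantity is
`(1 - P) * (1 - Q) - P * Q * (1 - exp (-d))`. -/
lemma exp_pair_bounds {A B d : ℝ} (hA : 0 ≤ A) (hB : 0 ≤ B) (hd : 0 ≤ d) (hdAB : d ≤ A * B / 2) :
    (1 - exp (-A)) * (1 - exp (-B)) / 2 ≤ 1 + exp (-(A + B + d)) - exp (-A) - exp (-B) ∧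
      1 + exp (-(A + B + d)) - exp (-A) - exp (-B) ≤ (1 - exp (-A)) * (1 - exp (-B)) := by
  have expand : 1 + exp (-(A + B + d)) - exp (-A) - exp (-B) =
      (1 - exp (-A)) * (1 - exp (-B)) - exp (-A) * exp (-B) * (1 - exp (-d)) := by
    rw [show -(A + B + d) = -A + -B + -d by ring, exp_add, exp_add]
    ring
  have correction_nonneg : 0 ≤ exp (-A) * exp (-B) * (1 - exp (-d)) :=
    mul_nonneg (by positivity) (one_sub_exp_neg_nonneg hd)
  have correction_le : exp (-A) * exp (-B) * (1 - exp (-d)) ≤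
      (1 - exp (-A)) * (1 - exp (-B)) / 2 := by
    calc exp (-A) * exp (-B) * (1 - exp (-d))
        ≤ exp (-A) * exp (-B) * (A * B / 2) := by
          gcongr
          exact (one_sub_exp_neg_le d).trans hdAB
      _ = A * exp (-A) * (B * exp (-B)) / 2 := by ring
      _ ≤ (1 - exp (-A)) * (1 - exp (-B)) / 2 := by
          gcongr
          · exact one_sub_exp_neg_nonneg hA
          · exact mul_exp_neg_le_one_sub_exp_neg A
          · exact mul_exp_neg_le_one_sub_exp_neg B
  rw [expand]
  constructor <;> linarith

lemma one_sub_exp_neg_bounds {r : ℝ} (hr : 0 ≤ r) :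
    min 1 r / 2 ≤ 1 - exp (-(2 * r)) ∧ 1 - exp (-(2 * r)) ≤ 2 * min 1 r := by
  refine ⟨?_, ?_⟩
  · have h0 : 0 ≤ min 1 r := le_min zero_le_one hr
    have h1 : exp (-(2 * r)) ≤ exp (-min 1 r) := by
      gcongr
      linarith [min_le_right 1 r]
    have h2 := mul_exp_neg_le_one_sub_exp_neg (min 1 r)
    nlinarith [min_le_left 1 r, exp_pos (-min 1 r)]
  · rw [mul_min_of_nonneg _ _ zero_le_two]
    exact le_min (by linarith [exp_pos (-(2 * r))]) (one_sub_exp_neg_le _)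

end ExponentialBounds

section Images

open HurwitzZeta

lemma pker_symm (a t x y : ℝ) : pker a t x y = pker a t y x := by
  unfold pker
  congr 1
  exact tsum_congr fun n ↦ by ring

lemma pker_sub_sub {a : ℝ} (ha : a ≠ 0) (t x y : ℝ) :
    pker a t (a - x) (a - y) = pker a t x y := by
  have sin_reflect (n : ℕ) (u : ℝ) : sin (π * ((n : ℝ) + 1) * (a - u) / a) =
      (-1) ^ n * sin (π * ((n : ℝ) + 1) * u / a) := by
    rw [show π * ((n : ℝ) + 1) * (a - u) / a =
        ((n + 1 : ℕ) : ℝ) * π - π * ((n : ℝ) + 1) * u / a by push_cast; field_simp,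
      sin_nat_mul_pi_sub, pow_succ]
    ring
  have sign_sq (n : ℕ) : (-1 : ℝ) ^ n * (-1) ^ n = 1 := by
    rw [← mul_pow, neg_one_mul, neg_neg, one_pow]
  unfold pker
  congr 1
  refine tsum_congr fun n ↦ ?_
  rw [sin_reflect, sin_reflect]
  linear_combination (exp (-(π ^ 2) * ((n : ℝ) + 1) ^ 2 * t / (2 * a ^ 2)) *
    sin (π * ((n : ℝ) + 1) * x / a) * sin (π * ((n : ℝ) + 1) * y / a)) * sign_sq n

lemma pker_eq_pker_one {a : ℝ} (ha : a ≠ 0) (t x y : ℝ) :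
    pker a t x y = 1 / a * pker 1 (t / a ^ 2) (x / a) (y / a) := by
  unfold pker
  rw [← mul_assoc, show 1 / a * (2 / 1) = 2 / a by ring]
  congr 1
  refine tsum_congr fun n ↦ ?_
  have sin_arg (u : ℝ) : π * ((n : ℝ) + 1) * (u / a) / 1 = π * ((n : ℝ) + 1) * u / a := by ring
  rw [sin_arg, sin_arg]
  congr 3
  field_simp

lemma pker_eq_cosKernel_sub {a t : ℝ} (ha : 0 < a) (ht : 0 < t) (x y : ℝ) :
    pker a t x y = (cosKernel ((y - x) / (2 * a) : ℝ) (π * t / (2 * a ^ 2)) -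
      cosKernel ((y + x) / (2 * a) : ℝ) (π * t / (2 * a ^ 2))) / (2 * a) := by
  have hτ : 0 < π * t / (2 * a ^ 2) := by positivity
  have product_to_sum (n : ℕ) :
      exp (-(π ^ 2) * ((n : ℝ) + 1) ^ 2 * t / (2 * a ^ 2)) *
          sin (π * ((n : ℝ) + 1) * x / a) * sin (π * ((n : ℝ) + 1) * y / a) =
        1 / 4 * (2 * cos (2 * π * ((y - x) / (2 * a)) * (n + 1)) *
            exp (-π * (n + 1) ^ 2 * (π * t / (2 * a ^ 2))) -
          2 * cos (2 * π * ((y + x) / (2 * a)) * (n + 1)) *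
            exp (-π * (n + 1) ^ 2 * (π * t / (2 * a ^ 2)))) := by
    rw [show 2 * π * ((y - x) / (2 * a)) * ((n : ℝ) + 1) =
        π * (n + 1) * y / a - π * (n + 1) * x / a by ring,
      show 2 * π * ((y + x) / (2 * a)) * ((n : ℝ) + 1) =
        π * (n + 1) * y / a + π * (n + 1) * x / a by ring,
      show -π * ((n : ℝ) + 1) ^ 2 * (π * t / (2 * a ^ 2)) =
        -(π ^ 2) * ((n : ℝ) + 1) ^ 2 * t / (2 * a ^ 2) by ring, cos_sub, cos_add]
    ring
  have cosine_series := ((hasSum_nat_cosKernel₀ ((y - x) / (2 * a)) hτ).sub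
    (hasSum_nat_cosKernel₀ ((y + x) / (2 * a)) hτ)).mul_left (1 / 4)
  rw [pker, tsum_congr product_to_sum, cosine_series.tsum_eq]
  ring

lemma hasSum_cosKernel {τ : ℝ} (hτ : 0 < τ) (b : ℝ) :
    HasSum (fun k : ℤ ↦ exp (-π * (k + b) ^ 2 / τ)) (√τ * cosKernel b τ) := by
  have h := hasSum_int_evenKernel b (one_div_pos.2 hτ)
  rw [evenKernel_functional_equation, one_div_one_div, ← sqrt_eq_rpow, one_div τ, sqrt_inv,
    one_div, inv_inv] at h
  simpa only [div_eq_mul_inv] using h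

/-- The `k`-th term of the method of images on `(0,1)`, normalised by the free heat kernel:
with `s = 2 / t`, it is the quotient of
`exp (-(y + 2k - x)² / (2t)) - exp (-(y + 2k + x)² / (2t))` by `exp (-(y - x)² / (2t))`. -/
noncomputable def imageTerm (s x y : ℝ) (k : ℤ) : ℝ :=
  exp (-(s * (k * (k + y - x)))) - exp (-(s * ((x + k) * (y + k))))

lemma hasSum_imageTerm {t : ℝ} (ht : 0 < t) (x y : ℝ) :
    HasSum (imageTerm (2 / t) x y)
      (√(2 * π * t) * exp ((x - y) ^ 2 / (2 * t)) * pker 1 t x y) := by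
  have hτ : 0 < π * t / (2 * 1 ^ 2) := by positivity
  have hsum := ((hasSum_cosKernel hτ ((y - x) / (2 * 1))).sub
    (hasSum_cosKernel hτ ((y + x) / (2 * 1)))).mul_left (exp ((x - y) ^ 2 / (2 * t)))
  have sqrt_eq : √(2 * π * t) = 2 * √(π * t / (2 * 1 ^ 2)) := by
    rw [show 2 * π * t = 2 ^ 2 * (π * t / (2 * 1 ^ 2)) by ring, sqrt_mul (by norm_num),
      sqrt_sq zero_le_two]
  rw [pker_eq_cosKernel_sub one_pos ht, sqrt_eq, show ∀ e r p q : ℝ,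
    2 * r * e * ((p - q) / (2 * 1)) = e * (r * p - r * q) from fun _ _ _ _ ↦ by ring]
  refine hsum.congr_fun fun k ↦ ?_
  rw [mul_sub, ← exp_add, ← exp_add, imageTerm]
  congr 2 <;> field_simp <;> ring

end Images

section OppositeHalves

variable {s x v : ℝ}

lemma imageTerm_add_imageTerm_neg_succ (s x v : ℝ) (k : ℕ) :
    imageTerm s x (1 - v) k + imageTerm s x (1 - v) (-(k + 1)) =
      exp (-(s * (k * (k + 1 - v - x)))) *
        (1 + exp (-(s * ((2 * k + 1) * x - x * v) + s * ((2 * k + 1) * v - x * v) +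
            2 * (s * (x * v)))) -
          exp (-(s * ((2 * k + 1) * x - x * v))) - exp (-(s * ((2 * k + 1) * v - x * v)))) := by
  rw [mul_sub, mul_sub, mul_add, ← exp_add, ← exp_add, ← exp_add, imageTerm, imageTerm]
  push_cast
  ring_nf

lemma half_le_odd_mul_sub (hx : 0 ≤ x) (hv : v ≤ 1 / 2) (k : ℕ) :
    x / 2 ≤ (2 * k + 1) * x - x * v := by
  nlinarith [mul_nonneg (Nat.cast_nonneg (α := ℝ) k) hx]

lemma one_sub_exp_neg_odd_nonneg (hs : 0 ≤ s) (hx : 0 ≤ x) (hv : v ≤ 1 / 2) (k : ℕ) :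
    0 ≤ 1 - exp (-(s * ((2 * k + 1) * x - x * v))) :=
  one_sub_exp_neg_nonneg (mul_nonneg hs (by linarith [half_le_odd_mul_sub hx hv k]))

lemma imageTerm_pair_bounds (hs : 16 ≤ s) (hx : 0 ≤ x) (hx2 : x ≤ 1 / 2) (hv : 0 ≤ v)
    (hv2 : v ≤ 1 / 2) (k : ℕ) :
    exp (-(s * (k * (k + 1 - v - x)))) *
        ((1 - exp (-(s * ((2 * k + 1) * x - x * v)))) *
          (1 - exp (-(s * ((2 * k + 1) * v - x * v)))) / 2) ≤
      imageTerm s x (1 - v) k + imageTerm s x (1 - v) (-(k + 1)) ∧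
    imageTerm s x (1 - v) k + imageTerm s x (1 - v) (-(k + 1)) ≤
      exp (-(s * (k * (k + 1 - v - x)))) *
        ((1 - exp (-(s * ((2 * k + 1) * x - x * v)))) *
          (1 - exp (-(s * ((2 * k + 1) * v - x * v))))) := by
  have hs0 : 0 ≤ s := by linarith
  have hX : x / 2 ≤ (2 * k + 1) * x - x * v := half_le_odd_mul_sub hx hv2 k
  have hV : v / 2 ≤ (2 * k + 1) * v - x * v := by
    rw [mul_comm x v]
    exact half_le_odd_mul_sub hv hx2 k
  have cross_le : 2 * (s * (x * v)) ≤
      s * ((2 * k + 1) * x - x * v) * (s * ((2 * k + 1) * v - x * v)) / 2 := by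
    calc 2 * (s * (x * v)) = 16 * s * (x / 2) * (v / 2) / 2 := by ring
      _ ≤ s * s * ((2 * k + 1) * x - x * v) * ((2 * k + 1) * v - x * v) / 2 := by
          have : 0 ≤ (2 * k + 1) * x - x * v := by linarith
          gcongr
      _ = _ := by ring
  have bounds := exp_pair_bounds (mul_nonneg hs0 (by linarith)) (mul_nonneg hs0 (by linarith))
    (by positivity) cross_le
  rw [imageTerm_add_imageTerm_neg_succ]
  exact ⟨by gcongr; exact bounds.1, by gcongr; exact bounds.2⟩

lemma one_sub_exp_neg_odd_mul_le (hs : 0 ≤ s) (hx : 0 ≤ x) (hv : 0 ≤ v) (hv2 : v ≤ 1 / 2)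
    (k : ℕ) :
    1 - exp (-(s * ((2 * k + 1) * x - x * v))) ≤
      2 * (2 * k + 1) * (1 - exp (-(s * (x * (1 - v))))) := by
  have h1v : 0 < 1 - v := by linarith
  have hk : (0 : ℝ) ≤ k := k.cast_nonneg
  have ratio_ge : 1 ≤ (2 * k + 1 - v) / (1 - v) := by
    rw [le_div_iff₀ h1v]
    linarith [hk]
  have ratio_le : (2 * k + 1 - v) / (1 - v) ≤ 2 * (2 * k + 1) := by
    rw [div_le_iff₀ h1v]
    nlinarith [mul_nonneg hk hv]
  calc 1 - exp (-(s * ((2 * k + 1) * x - x * v)))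
      = 1 - exp (-((2 * k + 1 - v) / (1 - v) * (s * (x * (1 - v))))) := by
        congr 3
        field_simp
    _ ≤ (2 * k + 1 - v) / (1 - v) * (1 - exp (-(s * (x * (1 - v))))) :=
        one_sub_exp_neg_mul_le ratio_ge _
    _ ≤ 2 * (2 * k + 1) * (1 - exp (-(s * (x * (1 - v))))) := by
        gcongr
        exact one_sub_exp_neg_nonneg (by positivity)

lemma summable_odd_sq_mul_exp_neg :
    Summable fun k : ℕ ↦ 4 * (2 * (k : ℝ) + 1) ^ 2 * exp (-(k : ℝ)) := by
  have h0 := summable_pow_mul_exp_neg_nat_mul 0 one_pos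
  have h1 := summable_pow_mul_exp_neg_nat_mul 1 one_pos
  have h2 := summable_pow_mul_exp_neg_nat_mul 2 one_pos
  refine (((h2.mul_left 16).add (h1.mul_left 16)).add (h0.mul_left 4)).congr fun k ↦ ?_
  simp only [neg_one_mul]
  ring

lemma imageTerm_pair_le (hs : 16 ≤ s) (hx : 0 ≤ x) (hx2 : x ≤ 1 / 2) (hv : 0 ≤ v)
    (hv2 : v ≤ 1 / 2) (k : ℕ) :
    imageTerm s x (1 - v) k + imageTerm s x (1 - v) (-(k + 1)) ≤
      4 * (2 * (k : ℝ) + 1) ^ 2 * exp (-(k : ℝ)) *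
        ((1 - exp (-(s * (x * (1 - v))))) * (1 - exp (-(s * ((1 - x) * v))))) := by
  have hs0 : 0 ≤ s := by linarith
  have hk : (k : ℝ) ≤ k * k := by exact_mod_cast k.le_mul_self
  have gaussian_le : exp (-(s * (k * (k + 1 - v - x)))) ≤ exp (-(k : ℝ)) := by
    have : (k : ℝ) ≤ k * (k + 1 - v - x) := by nlinarith [k.cast_nonneg (α := ℝ)]
    gcongr
    nlinarith [k.cast_nonneg (α := ℝ)]
  have left_le := one_sub_exp_neg_odd_mul_le hs0 hx hv hv2 k
  have right_le := one_sub_exp_neg_odd_mul_le hs0 hv hx hx2 k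
  rw [mul_comm v x, mul_comm v (1 - x)] at right_le
  have left_nonneg : 0 ≤ 1 - exp (-(s * (x * (1 - v)))) :=
    one_sub_exp_neg_nonneg (mul_nonneg hs0 (mul_nonneg hx (by linarith)))
  have odd_left_nonneg := one_sub_exp_neg_odd_nonneg hs0 hx hv2 k
  have odd_right_nonneg := one_sub_exp_neg_odd_nonneg hs0 hv hx2 k
  rw [mul_comm v x] at odd_right_nonneg
  calc imageTerm s x (1 - v) k + imageTerm s x (1 - v) (-(k + 1))
      ≤ exp (-(s * (k * (k + 1 - v - x)))) *
        ((1 - exp (-(s * ((2 * k + 1) * x - x * v)))) *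
          (1 - exp (-(s * ((2 * k + 1) * v - x * v))))) :=
        (imageTerm_pair_bounds hs hx hx2 hv hv2 k).2
    _ ≤ exp (-(k : ℝ)) * (2 * (2 * k + 1) * (1 - exp (-(s * (x * (1 - v))))) *
          (2 * (2 * k + 1) * (1 - exp (-(s * ((1 - x) * v)))))) := by
        gcongr
    _ = _ := by ring

lemma hasSum_imageTerm_opposite_bounds {S : ℝ} (hs : 16 ≤ s) (hx : 0 ≤ x) (hx2 : x ≤ 1 / 2)
    (hv : 0 ≤ v) (hv2 : v ≤ 1 / 2) (hS : HasSum (imageTerm s x (1 - v)) S) :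
    1 / 2 * ((1 - exp (-(s * (x * (1 - v))))) * (1 - exp (-(s * ((1 - x) * v))))) ≤ S ∧
      S ≤ (∑' k : ℕ, 4 * (2 * (k : ℝ) + 1) ^ 2 * exp (-(k : ℝ))) *
        ((1 - exp (-(s * (x * (1 - v))))) * (1 - exp (-(s * ((1 - x) * v))))) := by
  have pairs := hS.nat_add_neg_add_one
  have pair_nonneg (k : ℕ) :
      0 ≤ imageTerm s x (1 - v) k + imageTerm s x (1 - v) (-(k + 1)) := by
    refine le_trans ?_ (imageTerm_pair_bounds hs hx hx2 hv hv2 k).1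
    have odd_left_nonneg := one_sub_exp_neg_odd_nonneg (by linarith : 0 ≤ s) hx hv2 k
    have odd_right_nonneg := one_sub_exp_neg_odd_nonneg (by linarith : 0 ≤ s) hv hx2 k
    rw [mul_comm v x] at odd_right_nonneg
    positivity
  constructor
  · refine le_trans ?_ (le_hasSum pairs 0 fun k _ ↦ pair_nonneg k)
    have first_pair := (imageTerm_pair_bounds hs hx hx2 hv hv2 0).1
    refine le_trans (le_of_eq ?_) first_pair
    rw [Nat.cast_zero, zero_mul, mul_zero, neg_zero, exp_zero]
    ring_nf
  · have major := summable_odd_sq_mul_exp_neg.hasSum.mul_right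
      ((1 - exp (-(s * (x * (1 - v))))) * (1 - exp (-(s * ((1 - x) * v)))))
    exact hasSum_le (fun k ↦ imageTerm_pair_le hs hx hx2 hv hv2 k) pairs major

end OppositeHalves

section SameHalf

variable {s x y : ℝ}

lemma imageTerm_add_imageTerm_neg (s x y : ℝ) (k : ℤ) :
    imageTerm s x y k + imageTerm s x y (-k) =
      (1 - exp (-(s * (x * y)))) *
          (exp (-(s * (k * (k - (y - x))))) * (1 + exp (-(2 * (s * (k * (y - x))))))) -
        exp (-(s * ((k - x) * (k - y)))) * (1 - exp (-(2 * (s * (k * x))))) *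
          (1 - exp (-(2 * (s * (k * y))))) := by
  have expand (e p q r u v : ℝ) : (1 - e) * (p * (1 + q)) - r * (1 - u) * (1 - v) =
      p + p * q - e * p - e * p * q - r + r * u + r * v - r * u * v := by ring
  rw [expand, imageTerm, imageTerm]
  simp only [← exp_add]
  push_cast
  ring_nf

lemma succ_sq_mul_exp_neg_le (n : ℕ) :
    16 * (((n : ℝ) + 1) ^ 2 * exp (-(4 + 3 * n))) ≤ 1 / 3 * (1 / 2) ^ n := by
  have succ_le : (n : ℝ) + 1 ≤ 2 ^ n := by exact_mod_cast n.lt_two_pow_self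
  calc 16 * (((n : ℝ) + 1) ^ 2 * exp (-(4 + 3 * n)))
      = 16 * (((n : ℝ) + 1) ^ 2 * exp (-((4 + 3 * n : ℕ) : ℝ))) := by push_cast; rfl
    _ ≤ 16 * ((2 ^ n) ^ 2 * (3 / 8) ^ (4 + 3 * n)) := by
        gcongr
        exact exp_neg_natCast_le _
    _ = 16 * (3 / 8) ^ 4 * (2 ^ 2 * (3 / 8) ^ 3) ^ n := by
        rw [mul_pow, ← pow_mul, ← pow_mul, ← pow_mul, pow_add]
        ring
    _ ≤ 1 / 3 * (1 / 2) ^ n := by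
        gcongr <;> norm_num

lemma reflected_weight_le_of_quarter_le (hs : 16 ≤ s) (hy : 1 / 4 ≤ y) (hy2 : y ≤ 1 / 2)
    (n : ℕ) :
    2 * ((n : ℝ) + 1) / y * (1 - exp (-(2 * (s * ((n + 1) * y))))) *
      exp (-(s * ((n + 1 - y) ^ 2))) ≤ 1 / 3 * (1 / 2) ^ n := by
  have hn : (0 : ℝ) ≤ n := n.cast_nonneg
  have slope_le : 2 * ((n : ℝ) + 1) / y ≤ 8 * (n + 1) := by
    rw [div_le_iff₀ (by linarith)]
    nlinarith
  have boundary_le : 1 - exp (-(2 * (s * (((n : ℝ) + 1) * y)))) ≤ 1 := by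
    linarith [exp_pos (-(2 * (s * (((n : ℝ) + 1) * y))))]
  have gaussian_le : exp (-(s * (((n : ℝ) + 1 - y) ^ 2))) ≤ exp (-(4 + 3 * n)) := by
    have : 1 / 4 + (n : ℝ) ≤ (n + 1 - y) ^ 2 := by nlinarith
    gcongr
    nlinarith
  calc _ ≤ 8 * ((n : ℝ) + 1) * 1 * exp (-(4 + 3 * n)) := by
        have : 0 ≤ y := by linarith
        gcongr
        exact one_sub_exp_neg_nonneg (by positivity)
    _ ≤ 16 * (((n : ℝ) + 1) ^ 2 * exp (-(4 + 3 * n))) := by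
        nlinarith [mul_nonneg hn (exp_pos (-(4 + 3 * (n : ℝ)))).le,
          mul_nonneg (sq_nonneg (n : ℝ)) (exp_pos (-(4 + 3 * (n : ℝ)))).le,
          exp_pos (-(4 + 3 * (n : ℝ)))]
    _ ≤ 1 / 3 * (1 / 2) ^ n := succ_sq_mul_exp_neg_le n

lemma reflected_weight_le_of_le_quarter (hs : 16 ≤ s) (hy : 0 < y) (hy4 : y ≤ 1 / 4) (n : ℕ) :
    2 * ((n : ℝ) + 1) / y * (1 - exp (-(2 * (s * ((n + 1) * y))))) *
      exp (-(s * ((n + 1 - y) ^ 2))) ≤ 1 / 3 * (1 / 2) ^ n := by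
  have hn : (0 : ℝ) ≤ n := n.cast_nonneg
  have gaussian_le : exp (-(s * (((n : ℝ) + 1 - y) ^ 2))) ≤
      exp (-(s / 4)) * exp (-(4 + 3 * n)) := by
    have : 9 / 16 + (n : ℝ) ≤ (n + 1 - y) ^ 2 := by nlinarith [hn]
    rw [← exp_add]
    gcongr
    nlinarith
  calc _ ≤ 2 * ((n : ℝ) + 1) / y * (2 * (s * ((n + 1) * y))) *
        (exp (-(s / 4)) * exp (-(4 + 3 * n))) := by
        gcongr
        exact one_sub_exp_neg_le _
    _ = 16 * (s / 4 * exp (-(s / 4))) * (((n : ℝ) + 1) ^ 2 * exp (-(4 + 3 * n))) := by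
        field_simp
        ring
    _ ≤ 16 * 1 * (((n : ℝ) + 1) ^ 2 * exp (-(4 + 3 * n))) := by
        gcongr
        exact mul_exp_neg_le_one _
    _ ≤ 1 / 3 * (1 / 2) ^ n := by
        rw [mul_one]
        exact succ_sq_mul_exp_neg_le n

lemma reflected_images_le (hs : 16 ≤ s) (hx : 0 ≤ x) (hxy : x ≤ y) (hy : 0 < y)
    (hy2 : y ≤ 1 / 2) (n : ℕ) :
    exp (-(s * ((n + 1 - x) * (n + 1 - y)))) * (1 - exp (-(2 * (s * ((n + 1) * x))))) *
        (1 - exp (-(2 * (s * ((n + 1) * y))))) ≤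
      (1 - exp (-(s * (x * y)))) * (1 / 3 * (1 / 2) ^ n) := by
  have hn : (0 : ℝ) ≤ n := n.cast_nonneg
  have weight_le : 2 * ((n : ℝ) + 1) / y * (1 - exp (-(2 * (s * ((n + 1) * y))))) *
      exp (-(s * ((n + 1 - y) ^ 2))) ≤ 1 / 3 * (1 / 2) ^ n :=
    (le_total (1 / 4) y).elim (reflected_weight_le_of_quarter_le hs · hy2 n)
      (reflected_weight_le_of_le_quarter hs hy · n)
  have gaussian_le : exp (-(s * (((n : ℝ) + 1 - x) * (n + 1 - y)))) ≤
      exp (-(s * ((n + 1 - y) ^ 2))) := by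
    gcongr
    nlinarith
  have slope_ge : 1 ≤ 2 * ((n : ℝ) + 1) / y := by
    rw [le_div_iff₀ hy]
    linarith [hn]
  have bernoulli : 1 - exp (-(2 * (s * (((n : ℝ) + 1) * x)))) ≤
      2 * (n + 1) / y * (1 - exp (-(s * (x * y)))) := by
    rw [show 2 * (s * (((n : ℝ) + 1) * x)) = 2 * (n + 1) / y * (s * (x * y)) by field_simp]
    exact one_sub_exp_neg_mul_le slope_ge _
  have left_nonneg : 0 ≤ 1 - exp (-(2 * (s * (((n : ℝ) + 1) * x)))) :=
    one_sub_exp_neg_nonneg (by positivity)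
  have right_nonneg : 0 ≤ 1 - exp (-(2 * (s * (((n : ℝ) + 1) * y)))) :=
    one_sub_exp_neg_nonneg (by positivity)
  have main_nonneg : 0 ≤ 1 - exp (-(s * (x * y))) := one_sub_exp_neg_nonneg (by positivity)
  calc _ ≤ exp (-(s * (((n : ℝ) + 1 - y) ^ 2))) *
        (2 * (n + 1) / y * (1 - exp (-(s * (x * y))))) *
        (1 - exp (-(2 * (s * ((n + 1) * y))))) := by gcongr
    _ = (1 - exp (-(s * (x * y)))) * (2 * (n + 1) / y *
        (1 - exp (-(2 * (s * ((n + 1) * y))))) * exp (-(s * ((n + 1 - y) ^ 2)))) := by ring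
    _ ≤ (1 - exp (-(s * (x * y)))) * (1 / 3 * (1 / 2) ^ n) := by gcongr

lemma imageTerm_add_neg_bounds (hs : 16 ≤ s) (hx : 0 ≤ x) (hxy : x ≤ y) (hy : 0 < y)
    (hy2 : y ≤ 1 / 2) (n : ℕ) :
    -((1 - exp (-(s * (x * y)))) / 3) * (1 / 2) ^ n ≤
        imageTerm s x y (n + 1 : ℕ) + imageTerm s x y (-(n + 1 : ℕ)) ∧
      imageTerm s x y (n + 1 : ℕ) + imageTerm s x y (-(n + 1 : ℕ)) ≤
        2 * (1 - exp (-(s * (x * y)))) * (1 / 2) ^ n := by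
  have hn : (0 : ℝ) ≤ n := n.cast_nonneg
  have main_nonneg : 0 ≤ 1 - exp (-(s * (x * y))) := one_sub_exp_neg_nonneg (by positivity)
  have reflected_le := reflected_images_le hs hx hxy hy hy2 n
  have reflected_nonneg : 0 ≤ exp (-(s * (((n : ℝ) + 1 - x) * (n + 1 - y)))) *
      (1 - exp (-(2 * (s * ((n + 1) * x))))) * (1 - exp (-(2 * (s * ((n + 1) * y))))) :=
    mul_nonneg (mul_nonneg (exp_pos _).le (one_sub_exp_neg_nonneg (by positivity)))
      (one_sub_exp_neg_nonneg (by positivity))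
  have translated_le : exp (-(s * (((n : ℝ) + 1) * (n + 1 - (y - x))))) ≤ (1 / 2) ^ n := by
    refine le_trans (exp_le_exp.2 ?_) (exp_neg_natCast_le_half_pow n)
    have : (n : ℝ) / 2 ≤ (n + 1) * (n + 1 - (y - x)) := by nlinarith [hn]
    nlinarith [hn]
  have ratio_le : exp (-(2 * (s * (((n : ℝ) + 1) * (y - x))))) ≤ 1 :=
    exp_le_one_iff.2 (neg_nonpos.2 (by have := sub_nonneg.2 hxy; positivity))
  have translated_pair_le : (1 - exp (-(s * (x * y)))) *
      (exp (-(s * (((n : ℝ) + 1) * (n + 1 - (y - x))))) *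
        (1 + exp (-(2 * (s * ((n + 1) * (y - x))))))) ≤
      (1 - exp (-(s * (x * y)))) * ((1 / 2) ^ n * (1 + 1)) := by gcongr
  have translated_pair_nonneg : 0 ≤ (1 - exp (-(s * (x * y)))) *
      (exp (-(s * (((n : ℝ) + 1) * (n + 1 - (y - x))))) *
        (1 + exp (-(2 * (s * ((n + 1) * (y - x))))))) := by positivity
  rw [imageTerm_add_imageTerm_neg]
  push_cast
  constructor <;> linarith

lemma hasSum_imageTerm_same_bounds {S : ℝ} (hs : 16 ≤ s) (hx : 0 ≤ x) (hxy : x ≤ y)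
    (hy : 0 < y) (hy2 : y ≤ 1 / 2) (hS : HasSum (imageTerm s x y) S) :
    1 / 3 * (1 - exp (-(s * (x * y)))) ≤ S ∧ S ≤ 5 * (1 - exp (-(s * (x * y)))) := by
  have central : imageTerm s x y 0 = 1 - exp (-(s * (x * y))) := by
    simp only [imageTerm, Int.cast_zero, zero_mul, mul_zero, neg_zero, exp_zero, add_zero]
  have tail := (hasSum_nat_add_iff' 1).2 hS.nat_add_neg
  rw [Finset.sum_range_one, Nat.cast_zero, neg_zero, add_sub_add_right_eq_sub, central] at tail
  have lower := hasSum_le (fun n ↦ (imageTerm_add_neg_bounds hs hx hxy hy hy2 n).1)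
    (hasSum_geometric_two.mul_left _) tail
  have upper := hasSum_le (fun n ↦ (imageTerm_add_neg_bounds hs hx hxy hy hy2 n).2) tail
    (hasSum_geometric_two.mul_left _)
  constructor <;> linarith

end SameHalf

section HeatProfile

/-- The size of the Dirichlet heat kernel on `(0,a)` for `t ≤ a²`: a Gaussian damped at both
endpoints once the diffusion length `√t` exceeds the distance to the boundary. -/
noncomputable def heatProfile (a t x y : ℝ) : ℝ :=
  min 1 (x * y / t) * min 1 ((a - x) * (a - y) / t) *
    (1 / √t * exp (-(x - y) ^ 2 / (2 * t)))

lemma heatProfile_comm (a t x y : ℝ) : heatProfile a t x y = heatProfile a t y x := by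
  rw [heatProfile, heatProfile, mul_comm x y, mul_comm (a - x), ← neg_sub x y, neg_sq]

lemma heatProfile_sub_sub (a t x y : ℝ) :
    heatProfile a t (a - x) (a - y) = heatProfile a t x y := by
  rw [heatProfile, heatProfile, sub_sub_cancel, sub_sub_cancel, sub_sub_sub_cancel_left,
    ← neg_sub x y, neg_sq, mul_comm (min 1 ((a - x) * (a - y) / t))]

lemma heatProfile_nonneg {a t x y : ℝ} (ht : 0 ≤ t) (hx : x ∈ Icc 0 a) (hy : y ∈ Icc 0 a) :
    0 ≤ heatProfile a t x y := by
  have hxa := sub_nonneg.2 hx.2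
  have hya := sub_nonneg.2 hy.2
  have hx0 := hx.1
  have hy0 := hy.1
  unfold heatProfile
  positivity

lemma heatProfile_eq_heatProfile_one {a : ℝ} (ha : 0 < a) (t x y : ℝ) :
    heatProfile a t x y = 1 / a * heatProfile 1 (t / a ^ 2) (x / a) (y / a) := by
  have boundary (u v : ℝ) : u / a * (v / a) / (t / a ^ 2) = u * v / t := by
    field_simp
  have gaussian : -(x / a - y / a) ^ 2 / (2 * (t / a ^ 2)) = -(x - y) ^ 2 / (2 * t) := by
    field_simp
  have sqrt_div : √(t / a ^ 2) = √t / a := by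
    rw [sqrt_div' t (by positivity), sqrt_sq ha.le]
  rw [heatProfile, heatProfile, one_sub_div ha.ne', one_sub_div ha.ne', boundary, boundary,
    gaussian, sqrt_div]
  field_simp

end HeatProfile

section SmallTime

variable {t x y S : ℝ}

lemma min_one_div_bounds (ht : 0 < t) {A : ℝ} (hA : 0 ≤ A) :
    min 1 (A / t) / 2 ≤ 1 - exp (-(2 / t * A)) ∧ 1 - exp (-(2 / t * A)) ≤ 2 * min 1 (A / t) := by
  rw [show 2 / t * A = 2 * (A / t) by ring]
  exact one_sub_exp_neg_bounds (by positivity)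

lemma image_sum_same_bounds (ht : 0 < t) (ht8 : t ≤ 1 / 8) (hx : 0 < x) (hxy : x ≤ y)
    (hy2 : y ≤ 1 / 2) (hS : HasSum (imageTerm (2 / t) x y) S) :
    min 1 (x * y / t) * min 1 ((1 - x) * (1 - y) / t) ≤ 6 * S ∧
      S ≤ 10 * (min 1 (x * y / t) * min 1 ((1 - x) * (1 - y) / t)) := by
  have hs : 16 ≤ 2 / t := by
    rw [le_div_iff₀ ht]
    linarith
  have right_inactive : min 1 ((1 - x) * (1 - y) / t) = 1 := by
    refine min_eq_left ?_
    rw [le_div_iff₀ ht]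
    nlinarith
  have sum_bounds := hasSum_imageTerm_same_bounds hs hx.le hxy (by linarith) hy2 hS
  have left_bounds := min_one_div_bounds ht (mul_nonneg hx.le (hx.le.trans hxy))
  rw [right_inactive]
  constructor <;> linarith [sum_bounds.1, sum_bounds.2, left_bounds.1, left_bounds.2]

lemma image_sum_opposite_bounds (ht : 0 < t) (ht8 : t ≤ 1 / 8) (hx : 0 < x) (hx2 : x ≤ 1 / 2)
    (hy2 : 1 / 2 ≤ y) (hy : y < 1) (hS : HasSum (imageTerm (2 / t) x y) S) :
    min 1 (x * y / t) * min 1 ((1 - x) * (1 - y) / t) ≤ 8 * S ∧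
      S ≤ 4 * (∑' k : ℕ, 4 * (2 * (k : ℝ) + 1) ^ 2 * exp (-(k : ℝ))) *
        (min 1 (x * y / t) * min 1 ((1 - x) * (1 - y) / t)) := by
  have hs : 16 ≤ 2 / t := by
    rw [le_div_iff₀ ht]
    linarith
  have hxy : 0 ≤ x * y := mul_nonneg hx.le (by linarith)
  have hxy' : 0 ≤ (1 - x) * (1 - y) := mul_nonneg (by linarith) (by linarith)
  obtain ⟨lower, upper⟩ := hasSum_imageTerm_opposite_bounds (v := 1 - y) hs hx.le hx2
    (by linarith) (by linarith) (by rwa [sub_sub_cancel])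
  rw [sub_sub_cancel] at lower upper
  obtain ⟨left_lower, left_upper⟩ := min_one_div_bounds ht hxy
  obtain ⟨right_lower, right_upper⟩ := min_one_div_bounds ht hxy'
  have : 0 ≤ min 1 (x * y / t) := by positivity
  have : 0 ≤ min 1 ((1 - x) * (1 - y) / t) := by positivity
  have product_lower := mul_le_mul left_lower right_lower (by positivity) (by linarith)
  have product_upper := mul_le_mul left_upper right_upper (by linarith) (by positivity)
  constructor
  · linarith
  · calc S ≤ _ := upper
      _ ≤ (∑' k : ℕ, 4 * (2 * (k : ℝ) + 1) ^ 2 * exp (-(k : ℝ))) *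
          (2 * min 1 (x * y / t) * (2 * min 1 ((1 - x) * (1 - y) / t))) := by
          gcongr
      _ = _ := by ring

lemma exists_image_sum_bounds :
    ∃ K : ℝ, 0 < K ∧ ∀ t x y S : ℝ, 0 < t → t ≤ 1 / 8 → 0 < x → x ≤ y → x ≤ 1 / 2 → y < 1 →
      HasSum (imageTerm (2 / t) x y) S →
        min 1 (x * y / t) * min 1 ((1 - x) * (1 - y) / t) ≤ K * S ∧
          S ≤ K * (min 1 (x * y / t) * min 1 ((1 - x) * (1 - y) / t)) := by
  have series_nonneg : 0 ≤ ∑' k : ℕ, 4 * (2 * (k : ℝ) + 1) ^ 2 * exp (-(k : ℝ)) :=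
    tsum_nonneg fun k ↦ by positivity
  refine ⟨10 + 4 * ∑' k : ℕ, 4 * (2 * (k : ℝ) + 1) ^ 2 * exp (-(k : ℝ)), by positivity,
    fun t x y S ht ht8 hx hxy hx2 hy hS ↦ ?_⟩
  have boundary_nonneg : 0 ≤ min 1 (x * y / t) * min 1 ((1 - x) * (1 - y) / t) := by
    have : 0 < y := by linarith
    have : 0 < 1 - x := by linarith
    have : 0 < 1 - y := by linarith
    positivity
  rcases le_total y (1 / 2) with hy2 | hy2
  · obtain ⟨lower, upper⟩ := image_sum_same_bounds ht ht8 hx hxy hy2 hS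
    constructor <;> nlinarith
  · obtain ⟨lower, upper⟩ := image_sum_opposite_bounds ht ht8 hx hx2 hy2 hy hS
    constructor <;> nlinarith

lemma exists_sqrt_two_pi_mul_pker_bounds :
    ∃ K : ℝ, 0 < K ∧ ∀ t x y : ℝ, 0 < t → t ≤ 1 / 8 → 0 < x → x ≤ y → x ≤ 1 / 2 → y < 1 →
      heatProfile 1 t x y ≤ K * (√(2 * π) * pker 1 t x y) ∧
        √(2 * π) * pker 1 t x y ≤ K * heatProfile 1 t x y := by
  obtain ⟨K, hK, image_bounds⟩ := exists_image_sum_bounds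
  refine ⟨K, hK, fun t x y ht ht8 hx hxy hx2 hy ↦ ?_⟩
  obtain ⟨lower, upper⟩ := image_bounds t x y _ ht ht8 hx hxy hx2 hy (hasSum_imageTerm ht x y)
  have gaussian_nonneg : 0 ≤ 1 / √t * exp (-(x - y) ^ 2 / (2 * t)) := by positivity
  have denormalise : √(2 * π * t) * exp ((x - y) ^ 2 / (2 * t)) * pker 1 t x y *
      (1 / √t * exp (-(x - y) ^ 2 / (2 * t))) = √(2 * π) * pker 1 t x y := by
    rw [neg_div, exp_neg, sqrt_mul (by positivity)]
    field_simp
  have lower' := mul_le_mul_of_nonneg_right lower gaussian_nonneg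
  have upper' := mul_le_mul_of_nonneg_right upper gaussian_nonneg
  rw [mul_assoc K, denormalise] at lower'
  rw [denormalise, mul_assoc K] at upper'
  exact ⟨lower', upper'⟩

lemma exists_pker_comparable_of_le_eighth :
    ∃ K : ℝ, 0 < K ∧ ∀ t x y : ℝ, 0 < t → t ≤ 1 / 8 → x ∈ Ioo 0 1 → y ∈ Ioo 0 1 →
      heatProfile 1 t x y ≤ K * pker 1 t x y ∧ pker 1 t x y ≤ K * heatProfile 1 t x y := by
  obtain ⟨K, hK, bounds⟩ := exists_sqrt_two_pi_mul_pker_bounds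
  have sqrt_ge_one : 1 ≤ √(2 * π) := one_le_sqrt.2 (by linarith [pi_gt_three])
  refine ⟨K * √(2 * π), by positivity, fun t x y ht ht8 hx hy ↦ ?_⟩
  have of_le (x y : ℝ) (hx : 0 < x) (hxy : x ≤ y) (hy : y < 1) :
      heatProfile 1 t x y ≤ K * (√(2 * π) * pker 1 t x y) ∧
        √(2 * π) * pker 1 t x y ≤ K * heatProfile 1 t x y := by
    rcases le_total x (1 / 2) with hx2 | hx2
    · exact bounds t x y ht ht8 hx hxy hx2 hy
    · rw [← pker_sub_sub one_ne_zero, ← heatProfile_sub_sub, pker_symm, heatProfile_comm]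
      exact bounds t (1 - y) (1 - x) ht ht8 (by linarith) (by linarith) (by linarith)
        (by linarith)
  have both : heatProfile 1 t x y ≤ K * (√(2 * π) * pker 1 t x y) ∧
      √(2 * π) * pker 1 t x y ≤ K * heatProfile 1 t x y := by
    rcases le_total x y with hxy | hxy
    · exact of_le x y hx.1 hxy hy.2
    · rw [pker_symm, heatProfile_comm]
      exact of_le y x hy.1 hxy hx.2
  have profile_nonneg := heatProfile_nonneg ht.le (Ioo_subset_Icc_self hx)
    (Ioo_subset_Icc_self hy)
  have pker_nonneg : 0 ≤ pker 1 t x y :=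
    nonneg_of_mul_nonneg_right (nonneg_of_mul_nonneg_right (profile_nonneg.trans both.1) hK)
      (by positivity)
  refine ⟨(mul_assoc K _ _).symm ▸ both.1, ?_⟩
  calc pker 1 t x y ≤ √(2 * π) * pker 1 t x y := le_mul_of_one_le_left pker_nonneg sqrt_ge_one
    _ ≤ K * heatProfile 1 t x y := both.2
    _ ≤ K * √(2 * π) * heatProfile 1 t x y := by
        gcongr
        exact le_mul_of_one_le_right hK.le sqrt_ge_one

end SmallTime

section LargeTime

lemma abs_sin_nat_mul_le (n : ℕ) (θ : ℝ) : |sin (n * θ)| ≤ n * |sin θ| := by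
  induction n with
  | zero => simp
  | succ n ih =>
    push_cast
    rw [add_mul, one_mul, sin_add]
    calc |sin (n * θ) * cos θ + cos (n * θ) * sin θ|
        ≤ |sin (n * θ)| * |cos θ| + |cos (n * θ)| * |sin θ| := by
          rw [← abs_mul, ← abs_mul]
          exact abs_add_le _ _
      _ ≤ n * |sin θ| * 1 + 1 * |sin θ| := by
          gcongr
          · exact abs_cos_le_one _
          · exact abs_cos_le_one _
      _ = (n + 1) * |sin θ| := by ring

lemma sin_pi_mul_bounds_of_le_half {x : ℝ} (hx : 0 ≤ x) (hx2 : x ≤ 1 / 2) :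
    2 * (x * (1 - x)) ≤ sin (π * x) ∧ sin (π * x) ≤ 8 * (x * (1 - x)) := by
  have jordan : 2 * x ≤ sin (π * x) := by
    have h := mul_le_sin (x := π * x) (by positivity) (by nlinarith [pi_pos])
    rwa [← mul_assoc, div_mul_cancel₀ _ pi_ne_zero] at h
  have sin_le_arg : sin (π * x) ≤ π * x := sin_le (by positivity)
  constructor <;> nlinarith [pi_lt_four]

lemma sin_pi_mul_bounds {x : ℝ} (hx : x ∈ Icc 0 1) :
    2 * (x * (1 - x)) ≤ sin (π * x) ∧ sin (π * x) ≤ 8 * (x * (1 - x)) := by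
  obtain ⟨hx0, hx1⟩ := hx
  rcases le_total x (1 / 2) with h | h
  · exact sin_pi_mul_bounds_of_le_half hx0 h
  · have reflected := sin_pi_mul_bounds_of_le_half (x := 1 - x) (by linarith) (by linarith)
    rwa [show π * (1 - x) = π - π * x by ring, sin_pi_sub, sub_sub_cancel,
      mul_comm (1 - x)] at reflected

lemma sq_add_two_le_mul_pow (m : ℕ) : ((m : ℝ) + 2) ^ 2 ≤ 4 * (9 / 4) ^ m := by
  induction m with
  | zero => norm_num
  | succ k ih =>
    rw [pow_succ (9 / 4 : ℝ)]
    push_cast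
    nlinarith [(Nat.cast_nonneg k : (0 : ℝ) ≤ k)]

lemma exp_neg_nine_fifths_sub_le (m : ℕ) : exp (-(9 / 5 + 3 * m)) ≤ 1 / 5 * (1 / 18) ^ m := by
  have first : exp (-(9 / 5)) ≤ 1 / 5 := by
    refine le_of_pow_le_pow_left₀ (n := 5) (by norm_num) (by norm_num) ?_
    calc exp (-(9 / 5)) ^ 5 = exp (-((9 : ℕ) : ℝ)) := by
          rw [← exp_nat_mul]
          norm_num
      _ ≤ (3 / 8) ^ 9 := exp_neg_natCast_le 9
      _ ≤ (1 / 5) ^ 5 := by norm_num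
  have ratio : exp (-((3 : ℕ) : ℝ)) ≤ 1 / 18 := (exp_neg_natCast_le 3).trans (by norm_num)
  calc exp (-(9 / 5 + 3 * m)) = exp (-(9 / 5)) * exp (-((3 : ℕ) : ℝ)) ^ m := by
        rw [← exp_nat_mul, ← exp_add]
        push_cast
        ring_nf
    _ ≤ 1 / 5 * (1 / 18) ^ m := by gcongr

lemma sq_mul_exp_eigenvalue_le {t : ℝ} (ht : 1 / 8 ≤ t) (m : ℕ) :
    ((m : ℝ) + 2) ^ 2 * exp (-(π ^ 2) * ((m : ℝ) + 2) ^ 2 * t / 2) ≤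
      exp (-(π ^ 2) * t / 2) * (4 / 5 * (1 / 8) ^ m) := by
  have pi_sq : 9.6 ≤ π ^ 2 := by nlinarith [pi_gt_d2]
  have rate : 0.6 ≤ π ^ 2 * t / 2 := by nlinarith
  have gap : 9 / 5 + 3 * (m : ℝ) ≤ π ^ 2 * t / 2 * (((m : ℝ) + 2) ^ 2 - 1) := by
    have m_le_sq : (m : ℝ) ≤ m * m := mod_cast m.le_mul_self
    calc 9 / 5 + 3 * (m : ℝ) = 0.6 * (3 + 5 * m) := by ring
      _ ≤ _ := mul_le_mul rate (by linarith) (by positivity) (by linarith)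
  calc ((m : ℝ) + 2) ^ 2 * exp (-(π ^ 2) * ((m : ℝ) + 2) ^ 2 * t / 2)
      ≤ 4 * (9 / 4) ^ m * (exp (-(π ^ 2) * t / 2) * exp (-(9 / 5 + 3 * m))) := by
        rw [← exp_add]
        gcongr
        · exact sq_add_two_le_mul_pow m
        · linarith
    _ ≤ 4 * (9 / 4) ^ m * (exp (-(π ^ 2) * t / 2) * (1 / 5 * (1 / 18) ^ m)) := by
        gcongr
        exact exp_neg_nine_fifths_sub_le m
    _ = exp (-(π ^ 2) * t / 2) * (4 / 5 * (9 / 4 * (1 / 18)) ^ m) := by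
        rw [mul_pow]
        ring
    _ = exp (-(π ^ 2) * t / 2) * (4 / 5 * (1 / 8) ^ m) := by norm_num

lemma sin_pi_mul_nonneg {x : ℝ} (hx : x ∈ Icc 0 1) : 0 ≤ sin (π * x) :=
  sin_nonneg_of_nonneg_of_le_pi (mul_nonneg pi_pos.le hx.1)
    (mul_le_of_le_one_right pi_pos.le hx.2)

/-- The contribution of the `(n + 1)`-st Dirichlet eigenfunction of `(0,1)` to
`pker 1 t x y / 2`. -/
noncomputable def eigenTerm (t x y : ℝ) (n : ℕ) : ℝ :=
  exp (-(π ^ 2) * ((n : ℝ) + 1) ^ 2 * t / 2) *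
    (sin (((n : ℝ) + 1) * (π * x)) * sin (((n : ℝ) + 1) * (π * y)))

lemma pker_one_eq_two_mul_tsum (t x y : ℝ) : pker 1 t x y = 2 * ∑' n, eigenTerm t x y n := by
  rw [pker, div_one]
  congr 1
  refine tsum_congr fun n ↦ ?_
  rw [eigenTerm]
  ring_nf

lemma eigenTerm_zero (t x y : ℝ) :
    eigenTerm t x y 0 = exp (-(π ^ 2) * t / 2) * (sin (π * x) * sin (π * y)) := by
  simp only [eigenTerm, CharP.cast_eq_zero, zero_add, one_pow, mul_one, one_mul]

lemma norm_eigenTerm_succ_le {t x y : ℝ} (ht : 1 / 8 ≤ t) (hx : x ∈ Icc 0 1)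
    (hy : y ∈ Icc 0 1) (n : ℕ) :
    ‖eigenTerm t x y (n + 1)‖ ≤ eigenTerm t x y 0 * (4 / 5) * (1 / 8) ^ n := by
  have sin_le {u : ℝ} (hu : u ∈ Icc 0 1) :
      |sin ((((n + 1 : ℕ) : ℝ) + 1) * (π * u))| ≤ (n + 2) * sin (π * u) := by
    have h := abs_sin_nat_mul_le (n + 2) (π * u)
    rw [abs_of_nonneg (sin_pi_mul_nonneg hu)] at h
    push_cast at h ⊢
    rwa [add_assoc, one_add_one_eq_two]
  have sines_nonneg := mul_nonneg (sin_pi_mul_nonneg hx) (sin_pi_mul_nonneg hy)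
  rw [eigenTerm, norm_eq_abs, abs_mul, abs_mul, abs_exp]
  calc _ ≤ exp (-(π ^ 2) * (((n + 1 : ℕ) : ℝ) + 1) ^ 2 * t / 2) *
        ((n + 2) * sin (π * x) * ((n + 2) * sin (π * y))) := by
        gcongr
        · exact (abs_nonneg _).trans (sin_le hx)
        · exact sin_le hx
        · exact sin_le hy
    _ = ((n : ℝ) + 2) ^ 2 * exp (-(π ^ 2) * ((n : ℝ) + 2) ^ 2 * t / 2) *
        (sin (π * x) * sin (π * y)) := by
        push_cast
        ring_nf
    _ ≤ exp (-(π ^ 2) * t / 2) * (4 / 5 * (1 / 8) ^ n) * (sin (π * x) * sin (π * y)) :=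
        mul_le_mul_of_nonneg_right (sq_mul_exp_eigenvalue_le ht n) sines_nonneg
    _ = eigenTerm t x y 0 * (4 / 5) * (1 / 8) ^ n := by
        rw [eigenTerm_zero]
        ring

lemma abs_pker_one_sub_ground_state_le {t x y : ℝ} (ht : 1 / 8 ≤ t) (hx : x ∈ Icc 0 1)
    (hy : y ∈ Icc 0 1) :
    |pker 1 t x y - 2 * eigenTerm t x y 0| ≤ 64 / 35 * eigenTerm t x y 0 := by
  have geometric : HasSum (fun n : ℕ ↦ eigenTerm t x y 0 * (4 / 5) * (1 / 8 : ℝ) ^ n)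
      (eigenTerm t x y 0 * (4 / 5) * (1 - 1 / 8)⁻¹) :=
    (hasSum_geometric_of_lt_one (by norm_num) (by norm_num)).mul_left _
  have tail_le := norm_eigenTerm_succ_le ht hx hy
  have summable : Summable (eigenTerm t x y) :=
    (summable_nat_add_iff 1).1 (.of_norm_bounded geometric.summable tail_le)
  rw [pker_one_eq_two_mul_tsum, summable.tsum_eq_zero_add, mul_add, add_sub_cancel_left, abs_mul,
    abs_two]
  calc 2 * |∑' n, eigenTerm t x y (n + 1)|
      ≤ 2 * (eigenTerm t x y 0 * (4 / 5) * (1 - 1 / 8)⁻¹) := by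
        gcongr
        exact tsum_of_norm_bounded geometric tail_le
    _ = 64 / 35 * eigenTerm t x y 0 := by ring

lemma self_le_min_one_div_le {t u : ℝ} (ht : 1 / 8 ≤ t) (ht1 : t ≤ 1) (hu : u ∈ Icc 0 1) :
    u ≤ min 1 (u / t) ∧ min 1 (u / t) ≤ 8 * u := by
  have ht0 : 0 < t := by linarith
  refine ⟨le_min hu.2 ?_, (min_le_right _ _).trans ?_⟩
  · exact le_div_self hu.1 ht0 ht1
  · rw [div_le_iff₀ ht0]
    nlinarith [hu.1]

lemma heatProfile_one_bounds {t x y : ℝ} (ht : 1 / 8 ≤ t) (ht1 : t ≤ 1) (hx : x ∈ Icc 0 1)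
    (hy : y ∈ Icc 0 1) :
    exp (-4) * (x * (1 - x) * (y * (1 - y))) ≤ heatProfile 1 t x y ∧
      heatProfile 1 t x y ≤ 512 * (x * (1 - x) * (y * (1 - y))) := by
  have ht0 : 0 < t := by linarith
  have hx' : 1 - x ∈ Icc 0 1 := ⟨by linarith [hx.2], by linarith [hx.1]⟩
  have hy' : 1 - y ∈ Icc 0 1 := ⟨by linarith [hy.2], by linarith [hy.1]⟩
  have mul_mem {u v : ℝ} (hu : u ∈ Icc 0 1) (hv : v ∈ Icc 0 1) : u * v ∈ Icc (0 : ℝ) 1 :=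
    ⟨mul_nonneg hu.1 hv.1, mul_le_one₀ hu.2 hv.1 hv.2⟩
  obtain ⟨left_lower, left_upper⟩ := self_le_min_one_div_le ht ht1 (mul_mem hx hy)
  obtain ⟨right_lower, right_upper⟩ := self_le_min_one_div_le ht ht1 (mul_mem hx' hy')
  have left_nonneg := (mul_mem hx hy).1
  have right_nonneg := (mul_mem hx' hy').1
  have one_le_inv_sqrt : 1 ≤ 1 / √t := one_le_one_div (sqrt_pos.2 ht0) (sqrt_le_one.2 ht1)
  have inv_sqrt_le : 1 / √t ≤ 8 := by
    rw [div_le_iff₀ (sqrt_pos.2 ht0)]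
    linarith [le_sqrt_of_sq_le (show (1 / 8) ^ 2 ≤ t by linarith)]
  have gaussian_lower : exp (-4) ≤ exp (-(x - y) ^ 2 / (2 * t)) := by
    rw [exp_le_exp, le_div_iff₀ (by positivity)]
    nlinarith [hx.1, hx.2, hy.1, hy.2]
  have gaussian_upper : exp (-(x - y) ^ 2 / (2 * t)) ≤ 1 :=
    exp_le_one_iff.2 (div_nonpos_of_nonpos_of_nonneg (by nlinarith) (by positivity))
  constructor
  · calc exp (-4) * (x * (1 - x) * (y * (1 - y)))
        = x * y * ((1 - x) * (1 - y)) * (1 * exp (-4)) := by ring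
      _ ≤ heatProfile 1 t x y := by
          unfold heatProfile
          gcongr
  · calc heatProfile 1 t x y ≤ 8 * (x * y) * (8 * ((1 - x) * (1 - y))) * (8 * 1) := by
          unfold heatProfile
          gcongr
      _ = 512 * (x * (1 - x) * (y * (1 - y))) := by ring

lemma exists_pker_one_bounds_of_eighth_le :
    ∃ k : ℝ, 0 < k ∧ ∀ t x y : ℝ, 1 / 8 ≤ t → t ≤ 1 → x ∈ Icc 0 1 → y ∈ Icc 0 1 →
      k * (x * (1 - x) * (y * (1 - y))) ≤ pker 1 t x y ∧
        pker 1 t x y ≤ 256 * (x * (1 - x) * (y * (1 - y))) := by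
  refine ⟨6 / 35 * (exp (-(π ^ 2) / 2) * 4), by positivity, fun t x y ht ht1 hx hy ↦ ?_⟩
  have ground_state := abs_pker_one_sub_ground_state_le ht hx hy
  rw [eigenTerm_zero] at ground_state
  obtain ⟨pker_lower, pker_upper⟩ := abs_le.1 ground_state
  obtain ⟨x_lower, x_upper⟩ := sin_pi_mul_bounds hx
  obtain ⟨y_lower, y_upper⟩ := sin_pi_mul_bounds hy
  have hX : 0 ≤ x * (1 - x) := mul_nonneg hx.1 (sub_nonneg.2 hx.2)
  have hY : 0 ≤ y * (1 - y) := mul_nonneg hy.1 (sub_nonneg.2 hy.2)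
  have sines_lower := mul_le_mul x_lower y_lower (by positivity) (by linarith)
  have sines_upper := mul_le_mul x_upper y_upper (by linarith) (by positivity)
  have ground_lower : exp (-(π ^ 2) / 2) * (4 * (x * (1 - x) * (y * (1 - y)))) ≤
      exp (-(π ^ 2) * t / 2) * (sin (π * x) * sin (π * y)) := by
    refine mul_le_mul (exp_le_exp.2 ?_) (by linarith) (by positivity) (by positivity)
    nlinarith [sq_nonneg π]
  have ground_upper : exp (-(π ^ 2) * t / 2) * (sin (π * x) * sin (π * y)) ≤
      1 * (64 * (x * (1 - x) * (y * (1 - y)))) := by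
    refine mul_le_mul (exp_le_one_iff.2 ?_) (by linarith) ?_ zero_le_one
    · nlinarith [sq_nonneg π]
    · exact le_trans (by positivity) sines_lower
  have := mul_nonneg hX hY
  constructor <;> nlinarith

lemma exists_pker_comparable_of_eighth_le :
    ∃ K : ℝ, 0 < K ∧ ∀ t x y : ℝ, 1 / 8 ≤ t → t ≤ 1 → x ∈ Icc 0 1 → y ∈ Icc 0 1 →
      heatProfile 1 t x y ≤ K * pker 1 t x y ∧ pker 1 t x y ≤ K * heatProfile 1 t x y := by
  obtain ⟨k, hk, pker_bounds⟩ := exists_pker_one_bounds_of_eighth_le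
  refine ⟨512 / k + 256 / exp (-4), by positivity, fun t x y ht ht1 hx hy ↦ ?_⟩
  obtain ⟨pker_lower, pker_upper⟩ := pker_bounds t x y ht ht1 hx hy
  obtain ⟨profile_lower, profile_upper⟩ := heatProfile_one_bounds ht ht1 hx hy
  have weight_nonneg : 0 ≤ x * (1 - x) * (y * (1 - y)) :=
    mul_nonneg (mul_nonneg hx.1 (sub_nonneg.2 hx.2)) (mul_nonneg hy.1 (sub_nonneg.2 hy.2))
  constructor
  · calc heatProfile 1 t x y ≤ 512 * (x * (1 - x) * (y * (1 - y))) := profile_upper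
      _ = 512 / k * (k * (x * (1 - x) * (y * (1 - y)))) := by field_simp
      _ ≤ (512 / k + 256 / exp (-4)) * pker 1 t x y := by
          gcongr
          exact le_add_of_nonneg_right (by positivity)
  · calc pker 1 t x y ≤ 256 * (x * (1 - x) * (y * (1 - y))) := pker_upper
      _ = 256 / exp (-4) * (exp (-4) * (x * (1 - x) * (y * (1 - y)))) := by field_simp
      _ ≤ (512 / k + 256 / exp (-4)) * heatProfile 1 t x y := by
          gcongr
          exact le_add_of_nonneg_left (by positivity)

end LargeTime

section TwoSidedBound

lemma exists_pker_one_comparable_heatProfile :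
    ∃ K : ℝ, 0 < K ∧ ∀ t x y : ℝ, 0 < t → t ≤ 1 → x ∈ Ioo 0 1 → y ∈ Ioo 0 1 →
      heatProfile 1 t x y ≤ K * pker 1 t x y ∧ pker 1 t x y ≤ K * heatProfile 1 t x y := by
  obtain ⟨K₁, hK₁, small⟩ := exists_pker_comparable_of_le_eighth
  obtain ⟨K₂, hK₂, large⟩ := exists_pker_comparable_of_eighth_le
  refine ⟨K₁ + K₂, add_pos hK₁ hK₂, fun t x y ht ht1 hx hy ↦ ?_⟩
  have hx' := Ioo_subset_Icc_self hx
  have hy' := Ioo_subset_Icc_self hy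
  have profile_nonneg := heatProfile_nonneg ht.le hx' hy'
  rcases le_total t (1 / 8) with h | h
  · obtain ⟨lower, upper⟩ := small t x y ht h hx hy
    have := nonneg_of_mul_nonneg_right (profile_nonneg.trans lower) hK₁
    constructor <;> nlinarith
  · obtain ⟨lower, upper⟩ := large t x y h ht1 hx' hy'
    have := nonneg_of_mul_nonneg_right (profile_nonneg.trans lower) hK₂
    constructor <;> nlinarith

lemma exists_pker_comparable_heatProfile :
    ∃ K : ℝ, 0 < K ∧ ∀ a t x y : ℝ, 0 < a → 0 < t → t ≤ a ^ 2 → x ∈ Ioo 0 a → y ∈ Ioo 0 a →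
      heatProfile a t x y ≤ K * pker a t x y ∧ pker a t x y ≤ K * heatProfile a t x y := by
  obtain ⟨K, hK, comparable⟩ := exists_pker_one_comparable_heatProfile
  refine ⟨K, hK, fun a t x y ha ht hta hx hy ↦ ?_⟩
  have div_mem {u : ℝ} (hu : u ∈ Ioo 0 a) : u / a ∈ Ioo 0 1 :=
    ⟨div_pos hu.1 ha, (div_lt_one ha).2 hu.2⟩
  obtain ⟨lower, upper⟩ := comparable (t / a ^ 2) (x / a) (y / a) (by positivity)
    ((div_le_one (by positivity)).2 hta) (div_mem hx) (div_mem hy)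
  rw [pker_eq_pker_one ha.ne', heatProfile_eq_heatProfile_one ha, mul_left_comm K,
    mul_left_comm K]
  exact ⟨mul_le_mul_of_nonneg_left lower (by positivity),
    mul_le_mul_of_nonneg_left upper (by positivity)⟩

end TwoSidedBound

section BoundaryFactors

lemma min_one_le_mul {l α β : ℝ} (hl : 1 ≤ l) (h : β ≤ l * α) : min 1 β ≤ l * min 1 α := by
  rw [mul_min_of_nonneg _ _ (zero_le_one.trans hl), mul_one]
  exact min_le_min hl h

variable {s t x y z : ℝ}

lemma min_one_mul_min_one_le_mul_sq (hs : 0 < s) (ht : 0 < t) (hx : 0 < x) (hy : 0 < y)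
    (hxz : x ≤ 4 * z) :
    min 1 (x * z / s) * min 1 (z * y / t) ≤ 4 * (z ^ 2 / s) * min 1 (x * y / t) := by
  have hz : 0 < z := by linarith
  have second : min 1 (z * y / t) ≤ 4 * z / x * min 1 (x * y / t) := by
    refine min_one_le_mul ((one_le_div hx).2 hxz) ?_
    rw [show 4 * z / x * (x * y / t) = 4 * (z * y / t) by field_simp]
    linarith [show 0 ≤ z * y / t by positivity]
  calc min 1 (x * z / s) * min 1 (z * y / t)
      ≤ x * z / s * (4 * z / x * min 1 (x * y / t)) := by
        gcongr
        exact min_le_right _ _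
    _ = 4 * (z ^ 2 / s) * min 1 (x * y / t) := by field_simp

lemma min_one_mul_min_one_le_of_le (hs : 0 < s) (ht : 0 < t) (hx : 0 < x) (hy : 0 < y)
    (hz : 0 < z) (hzx : z ≤ x) :
    min 1 (x * z / s) * min 1 (z * y / t) ≤ x * z / s * min 1 (x * y / t) := by
  have : 0 ≤ x * z / s := div_nonneg (mul_nonneg hx.le hz.le) hs.le
  gcongr
  exact min_le_right _ _

lemma min_one_mul_min_one_le_of_le_mul {l : ℝ} (hl : 1 ≤ l) (ht : 0 < t) (hy : 0 < y)
    (hz : 0 < z) (hzx : z ≤ l * x) :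
    min 1 (x * z / s) * min 1 (z * y / t) ≤ l * min 1 (x * y / t) := by
  have second : min 1 (z * y / t) ≤ l * min 1 (x * y / t) := by
    refine min_one_le_mul hl ?_
    rw [← mul_div_assoc, ← mul_assoc]
    gcongr
  exact (mul_le_of_le_one_left (by positivity) (min_le_left _ _)).trans second

lemma min_one_mul_min_one_le_mul_one_add (hs : 0 < s) (ht : 0 < t) (hx : 0 < x) (hy : 0 < y)
    (hz : 0 < z) :
    min 1 (x * z / s) * min 1 (z * y / t) ≤ min 1 (x * y / t) * (1 + z ^ 2 / s) := by
  have boundary_nonneg : 0 ≤ min 1 (x * y / t) := by positivity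
  rcases le_total z x with hzx | hxz
  · have h := min_one_mul_min_one_le_of_le_mul (s := s) le_rfl ht hy hz
      (hzx.trans_eq (one_mul x).symm)
    rw [one_mul] at h
    exact h.trans (le_mul_of_one_le_right boundary_nonneg
      (le_add_of_nonneg_right (by positivity)))
  · have second : min 1 (z * y / t) ≤ z / x * min 1 (x * y / t) :=
      min_one_le_mul ((one_le_div hx).2 hxz) (by field_simp; rfl)
    calc min 1 (x * z / s) * min 1 (z * y / t)
        ≤ x * z / s * (z / x * min 1 (x * y / t)) := by
          gcongr
          exact min_le_right _ _
      _ = min 1 (x * y / t) * (z ^ 2 / s) := by field_simp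
      _ ≤ min 1 (x * y / t) * (1 + z ^ 2 / s) := by
          gcongr
          exact le_add_of_nonneg_left zero_le_one

end BoundaryFactors

section BridgeDensity

variable {s t x y z : ℝ}

/-- The (unnormalised) Gaussian factor in the density at time `s` of the free Brownian bridge of
length `t` from `x` to `y`. -/
noncomputable def bridgeGaussian (s t x y z : ℝ) : ℝ :=
  exp (-(z - (x + (y - x) * s / t)) ^ 2 / (2 * s))

lemma bridgeGaussian_pos (s t x y z : ℝ) : 0 < bridgeGaussian s t x y z :=
  exp_pos _

lemma bridgeGaussian_le_one (hs : 0 < s) (t x y z : ℝ) : bridgeGaussian s t x y z ≤ 1 :=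
  exp_le_one_iff.2 (div_nonpos_of_nonpos_of_nonneg (neg_nonpos.2 (sq_nonneg _)) (by positivity))

lemma bridgeGaussian_le_of_sq_le {d : ℝ} (hs : 0 < s)
    (hd : d ^ 2 ≤ (z - (x + (y - x) * s / t)) ^ 2) :
    bridgeGaussian s t x y z ≤ exp (-(d ^ 2 / (2 * s))) := by
  rw [bridgeGaussian, neg_div, exp_le_exp, neg_le_neg_iff]
  gcongr

lemma gaussian_mul_gaussian_le (hs : 0 < s) (hst : s < t) (x y z : ℝ) :
    exp (-(x - z) ^ 2 / (2 * s)) * exp (-(z - y) ^ 2 / (2 * (t - s))) ≤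
      exp (-(x - y) ^ 2 / (2 * t)) * bridgeGaussian s t x y z := by
  have ht : 0 < t := hs.trans hst
  have hts : 0 < t - s := sub_pos.2 hst
  have complete_square : -(x - z) ^ 2 / (2 * s) + -(z - y) ^ 2 / (2 * (t - s)) =
      -(x - y) ^ 2 / (2 * t) + -(z - (x + (y - x) * s / t)) ^ 2 / (2 * s) * (t / (t - s)) := by
    field_simp
    ring
  have one_le_ratio : 1 ≤ t / (t - s) := (one_le_div hts).2 (by linarith)
  have exponent_nonpos : -(z - (x + (y - x) * s / t)) ^ 2 / (2 * s) ≤ 0 :=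
    div_nonpos_of_nonpos_of_nonneg (neg_nonpos.2 (sq_nonneg _)) (by positivity)
  rw [bridgeGaussian, ← exp_add, ← exp_add, exp_le_exp, complete_square]
  linarith [mul_le_mul_of_nonpos_left one_le_ratio exponent_nonpos]

lemma bridge_mean_eq (ht : t ≠ 0) (s x y : ℝ) :
    x + (y - x) * s / t = x * (1 - s / t) + y * s / t := by
  field_simp
  ring

lemma bridgeGaussian_le_of_mean_le (hs : 0 < s) (ht : 0 < t) (hx : 0 < x) (hzx : 4 * x ≤ z)
    (hzy : 4 * (y * s) ≤ z * t) :
    bridgeGaussian s t x y z ≤ exp (-(z ^ 2 / (8 * s))) := by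
  have mean_le : x + (y - x) * s / t ≤ z / 2 := by
    have : y * s / t ≤ z / 4 := by
      rw [div_le_iff₀ ht]
      linarith
    rw [bridge_mean_eq ht.ne']
    nlinarith [show 0 < s / t by positivity]
  refine (bridgeGaussian_le_of_sq_le (d := z / 2) hs ?_).trans_eq (by ring_nf)
  exact pow_le_pow_left₀ (by linarith) (by linarith) 2

lemma bridgeGaussian_le_of_le_mean (hs : 0 < s) (hst : 2 * s ≤ t) (hx : 0 < x) (hy : 0 < y)
    (hzx : 4 * z ≤ x) :
    bridgeGaussian s t x y z ≤ exp (-(x ^ 2 / (32 * s))) := by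
  have ht : 0 < t := by linarith
  have le_mean : x / 2 ≤ x + (y - x) * s / t := by
    have ratio_le : s / t ≤ 1 / 2 := by
      rw [div_le_iff₀ ht]
      linarith
    rw [bridge_mean_eq ht.ne']
    nlinarith [show 0 < y * s / t by positivity]
  refine (bridgeGaussian_le_of_sq_le (d := x / 4) hs ?_).trans_eq (by ring_nf)
  rw [← neg_sq (z - _)]
  exact pow_le_pow_left₀ (by linarith) (by linarith) 2

lemma min_one_mul_min_one_mul_bridgeGaussian_le_mul (hs : 0 < s) (ht : 0 < t) (hx : 0 < x)
    (hy : 0 < y) (hxz : x ≤ 4 * z) :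
    min 1 (x * z / s) * min 1 (z * y / t) * bridgeGaussian s t x y z ≤
      32 * min 1 (x * y / t) := by
  have hz : 0 < z := by linarith
  have boundary_nonneg : 0 ≤ min 1 (x * y / t) := by positivity
  have product_nonneg : 0 ≤ min 1 (x * z / s) * min 1 (z * y / t) := by positivity
  have drop_gaussian := mul_le_of_le_one_right product_nonneg (bridgeGaussian_le_one hs t x y z)
  rcases le_total z (4 * x) with hzx | hzx
  · linarith [min_one_mul_min_one_le_of_le_mul (s := s) (by norm_num) ht hy hz hzx]
  rcases le_total (z * t) (4 * (y * s)) with hzy | hzy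
  · have first : min 1 (x * z / s) ≤ 4 * min 1 (x * y / t) := by
      refine min_one_le_mul (by norm_num) ?_
      rw [← mul_div_assoc, div_le_div_iff₀ hs ht]
      nlinarith
    have := mul_le_of_le_one_right (show 0 ≤ min 1 (x * z / s) by positivity)
      (min_le_left 1 (z * y / t))
    linarith
  · calc min 1 (x * z / s) * min 1 (z * y / t) * bridgeGaussian s t x y z
        ≤ 4 * (z ^ 2 / s) * min 1 (x * y / t) * exp (-(z ^ 2 / (8 * s))) :=
          mul_le_mul (min_one_mul_min_one_le_mul_sq hs ht hx hy hxz)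
            (bridgeGaussian_le_of_mean_le hs ht hx hzx hzy) (bridgeGaussian_pos ..).le
            (by positivity)
      _ = 32 * min 1 (x * y / t) * (z ^ 2 / (8 * s) * exp (-(z ^ 2 / (8 * s)))) := by ring
      _ ≤ 32 * min 1 (x * y / t) :=
          mul_le_of_le_one_right (by positivity) (mul_exp_neg_le_one _)

lemma near_factor_le (hs : 0 < s) (ht : 0 < t) (hx : 0 < x) (hy : 0 < y) (hxz : x ≤ 4 * z) :
    min 1 (x * z / s) * min 1 (z * y / t) * bridgeGaussian s t x y z ≤
      36 * min 1 (x * y / t) * (z ^ 2 / (s + z ^ 2)) := by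
  have hz : 0 < z := by linarith
  have product_nonneg : 0 ≤ min 1 (x * z / s) * min 1 (z * y / t) := by positivity
  have bounded := min_one_mul_min_one_mul_bridgeGaussian_le_mul hs ht hx hy hxz
  have decaying := (mul_le_of_le_one_right product_nonneg
    (bridgeGaussian_le_one hs t x y z)).trans (min_one_mul_min_one_le_mul_sq hs ht hx hy hxz)
  rw [show 4 * (z ^ 2 / s) * min 1 (x * y / t) = 4 * z ^ 2 * min 1 (x * y / t) / s by ring,
    le_div_iff₀ hs] at decaying
  rw [← mul_div_assoc, le_div_iff₀ (by positivity)]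
  linarith [mul_le_mul_of_nonneg_right bounded (sq_nonneg z)]

lemma one_add_mul_one_add_mul_exp_le {v : ℝ} (hv : 0 ≤ v) :
    (1 + 4 * v) * (1 + v) * exp (-(v / 32)) ≤ 16384 := by
  have half : (1 + v) * exp (-(v / 64)) ≤ 64 := by
    rw [exp_neg, ← div_eq_mul_inv, div_le_iff₀ (exp_pos _)]
    linarith [add_one_le_exp (v / 64)]
  calc (1 + 4 * v) * (1 + v) * exp (-(v / 32))
      ≤ 4 * (1 + v) * (1 + v) * exp (-(v / 32)) := by
        gcongr
        linarith
    _ = 4 * ((1 + v) * exp (-(v / 64))) ^ 2 := by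
        rw [mul_pow, ← exp_nat_mul]
        ring_nf
    _ ≤ 4 * 64 ^ 2 := by gcongr
    _ = 16384 := by norm_num

lemma far_factor_le (hs : 0 < s) (hst : 2 * s ≤ t) (hx : 0 < x) (hy : 0 < y) (hz : 0 < z)
    (hzx : 4 * z ≤ x) :
    min 1 (x * z / s) * min 1 (z * y / t) * bridgeGaussian s t x y z * (1 + 4 * (x ^ 2 / s)) ≤
      16384 * min 1 (x * y / t) * (x * z / (s + x ^ 2)) := by
  have ht : 0 < t := by linarith
  have := bridgeGaussian_pos s t x y z
  calc min 1 (x * z / s) * min 1 (z * y / t) * bridgeGaussian s t x y z * (1 + 4 * (x ^ 2 / s))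
      ≤ x * z / s * min 1 (x * y / t) * exp (-(x ^ 2 / (32 * s))) * (1 + 4 * (x ^ 2 / s)) := by
        gcongr ?_ * ?_ * _
        · exact min_one_mul_min_one_le_of_le hs ht hx hy hz (by linarith)
        · exact bridgeGaussian_le_of_le_mean hs hst hx hy hzx
    _ = (1 + 4 * (x ^ 2 / s)) * (1 + x ^ 2 / s) * exp (-(x ^ 2 / s / 32)) *
        (min 1 (x * y / t) * (x * z / (s + x ^ 2))) := by
        rw [show x ^ 2 / (32 * s) = x ^ 2 / s / 32 by ring]
        field_simp
    _ ≤ 16384 * (min 1 (x * y / t) * (x * z / (s + x ^ 2))) := by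
        gcongr
        exact one_add_mul_one_add_mul_exp_le (by positivity)
    _ = 16384 * min 1 (x * y / t) * (x * z / (s + x ^ 2)) := by ring

end BridgeDensity

section ProfileProduct

variable {a s t x y z : ℝ}

lemma min_one_div_sub_le (hs : 0 < s) (hst : 2 * s ≤ t) {A : ℝ} (hA : 0 ≤ A) :
    min 1 (A / (t - s)) ≤ 2 * min 1 (A / t) := by
  refine min_one_le_mul one_le_two ?_
  rw [← mul_div_assoc, div_le_div_iff₀ (by linarith) (by linarith)]
  nlinarith

lemma one_div_sqrt_sub_le (hs : 0 < s) (hst : 2 * s ≤ t) : 1 / √(t - s) ≤ 2 * (1 / √t) := by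
  have ht : 0 < √t := sqrt_pos.2 (by linarith)
  have hts : 0 < √(t - s) := sqrt_pos.2 (by linarith)
  have sqrt_le : √t ≤ 2 * √(t - s) := by
    rw [sqrt_le_left (by positivity), mul_pow, sq_sqrt (by linarith)]
    linarith
  rw [← mul_div_assoc, div_le_div_iff₀ hts ht]
  linarith

lemma heatProfile_mul_heatProfile_le (hs : 0 < s) (hst : 2 * s ≤ t) (hx : x ∈ Ioo 0 a)
    (hy : y ∈ Ioo 0 a) (hz : z ∈ Ioo 0 a) {L : ℝ}
    (hL : min 1 (x * z / s) * min 1 (z * y / t) * bridgeGaussian s t x y z *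
        (min 1 ((a - x) * (a - z) / s) * min 1 ((a - z) * (a - y) / t)) ≤
      L * (min 1 (x * y / t) * min 1 ((a - x) * (a - y) / t))) :
    heatProfile a s x z * heatProfile a (t - s) z y ≤
      8 * L * heatProfile a t x y * (1 / √s) := by
  obtain ⟨hx0, hxa⟩ := hx
  obtain ⟨hy0, hya⟩ := hy
  obtain ⟨hz0, hza⟩ := hz
  have ht : 0 < t := by linarith
  have : 0 < t - s := by linarith
  have : 0 < a - x := sub_pos.2 hxa
  have : 0 < a - y := sub_pos.2 hya
  have : 0 < a - z := sub_pos.2 hza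
  calc heatProfile a s x z * heatProfile a (t - s) z y
      = min 1 (x * z / s) * min 1 ((a - x) * (a - z) / s) *
          (min 1 (z * y / (t - s)) * min 1 ((a - z) * (a - y) / (t - s))) *
          (1 / √s * (1 / √(t - s))) *
          (exp (-(x - z) ^ 2 / (2 * s)) * exp (-(z - y) ^ 2 / (2 * (t - s)))) := by
        unfold heatProfile
        ring
    _ ≤ min 1 (x * z / s) * min 1 ((a - x) * (a - z) / s) *
          (2 * min 1 (z * y / t) * (2 * min 1 ((a - z) * (a - y) / t))) *
          (1 / √s * (2 * (1 / √t))) *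
          (exp (-(x - y) ^ 2 / (2 * t)) * bridgeGaussian s t x y z) := by
        gcongr ?_ * (?_ * ?_) * (?_ * ?_) * ?_
        · exact min_one_div_sub_le hs hst (by positivity)
        · exact min_one_div_sub_le hs hst (by positivity)
        · exact one_div_sqrt_sub_le hs hst
        · exact gaussian_mul_gaussian_le hs (by linarith) x y z
    _ = 8 * (1 / √s * (1 / √t) * exp (-(x - y) ^ 2 / (2 * t))) *
          (min 1 (x * z / s) * min 1 (z * y / t) * bridgeGaussian s t x y z *
            (min 1 ((a - x) * (a - z) / s) * min 1 ((a - z) * (a - y) / t))) := by ring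
    _ ≤ 8 * (1 / √s * (1 / √t) * exp (-(x - y) ^ 2 / (2 * t))) *
          (L * (min 1 (x * y / t) * min 1 ((a - x) * (a - y) / t))) := by gcongr
    _ = 8 * L * heatProfile a t x y * (1 / √s) := by
        unfold heatProfile
        ring

/-- The derivative of `s ↦ 2 * arctan (√s / r)`. It bounds the ratio of the bridge density near
the boundary point `0` to the distance from it, when `r` is the larger of the two distances. -/
noncomputable def arctanDensity (r s : ℝ) : ℝ :=
  1 / √s * (r / (s + r ^ 2))

lemma arctanDensity_nonneg {r : ℝ} (hr : 0 ≤ r) (hs : 0 ≤ s) : 0 ≤ arctanDensity r s := by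
  unfold arctanDensity
  positivity

lemma far_right_factor_le (hs : 0 < s) (ht : 0 < t) (hx : x ∈ Ioo 0 a) (hy : y ∈ Ioo 0 a)
    (hz : z ∈ Ioo 0 a) :
    min 1 ((a - x) * (a - z) / s) * min 1 ((a - z) * (a - y) / t) ≤
      2 * min 1 ((a - x) * (a - y) / t) * (1 + 4 * (x ^ 2 / s)) := by
  have hx' : 0 < a - x := sub_pos.2 hx.2
  have hy' : 0 < a - y := sub_pos.2 hy.2
  have hz' : 0 < a - z := sub_pos.2 hz.2
  have boundary_nonneg : 0 ≤ min 1 ((a - x) * (a - y) / t) := by positivity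
  rcases le_total x (a / 2) with hxa | hxa
  · refine (min_one_mul_min_one_le_of_le_mul one_le_two ht hy' hz'
      (by linarith [hz.1])).trans (le_mul_of_one_le_right (by positivity) ?_)
    exact le_add_of_nonneg_right (by positivity)
  · have sq_le : (a - z) ^ 2 / s ≤ 4 * (x ^ 2 / s) := by
      rw [← mul_div_assoc]
      gcongr
      nlinarith [hz.1]
    calc _ ≤ min 1 ((a - x) * (a - y) / t) * (1 + (a - z) ^ 2 / s) :=
          min_one_mul_min_one_le_mul_one_add hs ht hx' hy' hz'
      _ ≤ 2 * min 1 ((a - x) * (a - y) / t) * (1 + 4 * (x ^ 2 / s)) := by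
          gcongr
          exact le_mul_of_one_le_left boundary_nonneg one_le_two

lemma heatProfile_mul_heatProfile_le_of_four_mul_le (hs : 0 < s) (hst : 2 * s ≤ t)
    (hx : x ∈ Ioo 0 a) (hy : y ∈ Ioo 0 a) (hz : z ∈ Ioo 0 a) (hzx : 4 * z ≤ x) :
    heatProfile a s x z * heatProfile a (t - s) z y ≤
      262144 * heatProfile a t x y * (z * arctanDensity x s) := by
  have ht : 0 < t := by linarith
  have hx0 := hx.1
  have hy0 := hy.1
  have hz0 := hz.1
  have hy' : 0 < a - y := sub_pos.2 hy.2
  have : 0 < a - z := sub_pos.2 hz.2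
  refine (heatProfile_mul_heatProfile_le (L := 32768 * (x * z / (s + x ^ 2))) hs hst hx hy hz
    ?_).trans_eq (by unfold arctanDensity; ring)
  have left_nonneg : 0 ≤ min 1 (x * z / s) * min 1 (z * y / t) * bridgeGaussian s t x y z :=
    mul_nonneg (by positivity) (bridgeGaussian_pos ..).le
  have right_nonneg : 0 ≤ min 1 ((a - x) * (a - y) / t) :=
    le_min zero_le_one (div_nonneg (mul_nonneg (sub_pos.2 hx.2).le hy'.le) ht.le)
  calc _ ≤ min 1 (x * z / s) * min 1 (z * y / t) * bridgeGaussian s t x y z *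
        (2 * min 1 ((a - x) * (a - y) / t) * (1 + 4 * (x ^ 2 / s))) := by
        gcongr ?_ * ?_
        exact far_right_factor_le hs ht hx hy hz
    _ = min 1 (x * z / s) * min 1 (z * y / t) * bridgeGaussian s t x y z *
        (1 + 4 * (x ^ 2 / s)) * (2 * min 1 ((a - x) * (a - y) / t)) := by ring
    _ ≤ 16384 * min 1 (x * y / t) * (x * z / (s + x ^ 2)) *
        (2 * min 1 ((a - x) * (a - y) / t)) := by
        gcongr ?_ * _
        exact far_factor_le hs hst hx0 hy0 hz0 hzx
    _ = _ := by ring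

lemma heatProfile_mul_heatProfile_le_of_le_four_mul (hs : 0 < s) (hst : 2 * s ≤ t)
    (hx : x ∈ Ioo 0 a) (hy : y ∈ Ioo 0 a) (hz : z ∈ Ioo 0 a) (hxz : x ≤ 4 * z)
    (hxa : x ≤ a / 2) :
    heatProfile a s x z * heatProfile a (t - s) z y ≤
      576 * heatProfile a t x y * (z * arctanDensity z s) := by
  have ht : 0 < t := by linarith
  have hx0 := hx.1
  have hy0 := hy.1
  have hx' : 0 < a - x := sub_pos.2 hx.2
  have hy' : 0 < a - y := sub_pos.2 hy.2
  have hz' : 0 < a - z := sub_pos.2 hz.2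
  refine (heatProfile_mul_heatProfile_le (L := 72 * (z ^ 2 / (s + z ^ 2))) hs hst hx hy hz
    ?_).trans_eq (by unfold arctanDensity; ring)
  refine (mul_le_mul (near_factor_le hs ht hx0 hy0 hxz) (min_one_mul_min_one_le_of_le_mul
    one_le_two ht hy' hz' (by linarith [hz.1])) (by positivity)
    (by positivity)).trans_eq (by ring)

lemma heatProfile_mul_heatProfile_le_of_le_half (hs : 0 < s) (hst : 2 * s ≤ t)
    (hx : x ∈ Ioo 0 a) (hy : y ∈ Ioo 0 a) (hz : z ∈ Ioo 0 a) (hxa : x ≤ a / 2) :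
    heatProfile a s x z * heatProfile a (t - s) z y ≤
      262144 * heatProfile a t x y * (z * (arctanDensity x s + arctanDensity z s)) := by
  have hz0 := hz.1
  have profile_nonneg : 0 ≤ heatProfile a t x y :=
    heatProfile_nonneg (by linarith) (Ioo_subset_Icc_self hx) (Ioo_subset_Icc_self hy)
  have x_nonneg := arctanDensity_nonneg hx.1.le hs.le
  have z_nonneg := arctanDensity_nonneg hz.1.le hs.le
  rcases le_total x (4 * z) with hxz | hzx
  · refine (heatProfile_mul_heatProfile_le_of_le_four_mul hs hst hx hy hz hxz hxa).trans ?_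
    gcongr
    · norm_num
    · exact le_add_of_nonneg_left x_nonneg
  · refine (heatProfile_mul_heatProfile_le_of_four_mul_le hs hst hx hy hz hzx).trans ?_
    gcongr
    exact le_add_of_nonneg_right z_nonneg

/-- A bound, up to a constant factor, for the ratio of the density at `(s, z)` of the taboo bridge
started at `x` to the distance from `z` to `0`, in the first half of its time interval. -/
noncomputable def bridgeMajorant (a x z s : ℝ) : ℝ :=
  arctanDensity x s + arctanDensity z s + arctanDensity (a - x) s + arctanDensity (a - z) s

lemma heatProfile_mul_heatProfile_le_bridgeMajorant (hs : 0 < s) (hst : 2 * s ≤ t)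
    (hx : x ∈ Ioo 0 a) (hy : y ∈ Ioo 0 a) (hz : z ∈ Ioo 0 a) :
    heatProfile a s x z * heatProfile a (t - s) z y ≤
      2097152 * heatProfile a t x y * (z * bridgeMajorant a x z s) := by
  have sub_mem {u : ℝ} (hu : u ∈ Ioo 0 a) : a - u ∈ Ioo 0 a :=
    ⟨sub_pos.2 hu.2, sub_lt_self a hu.1⟩
  have hz0 := hz.1
  have profile_nonneg : 0 ≤ heatProfile a t x y :=
    heatProfile_nonneg (by linarith) (Ioo_subset_Icc_self hx) (Ioo_subset_Icc_self hy)
  have density_nonneg {u : ℝ} (hu : u ∈ Ioo 0 a) : 0 ≤ arctanDensity u s :=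
    arctanDensity_nonneg hu.1.le hs.le
  have left_le : arctanDensity x s + arctanDensity z s ≤ bridgeMajorant a x z s := by
    unfold bridgeMajorant
    linarith [density_nonneg (sub_mem hx), density_nonneg (sub_mem hz)]
  have right_le : arctanDensity (a - x) s + arctanDensity (a - z) s ≤ bridgeMajorant a x z s := by
    unfold bridgeMajorant
    linarith [density_nonneg hx, density_nonneg hz]
  have right_nonneg := add_nonneg (density_nonneg (sub_mem hx)) (density_nonneg (sub_mem hz))
  have x_nonneg := density_nonneg hx
  have left_nonneg := add_nonneg x_nonneg (density_nonneg hz)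
  rcases le_total x (a / 2) with hxa | hxa
  · refine (heatProfile_mul_heatProfile_le_of_le_half hs hst hx hy hz hxa).trans ?_
    gcongr
    norm_num
  rcases le_total x (4 * z) with hxz | hzx
  · rw [← heatProfile_sub_sub a s, ← heatProfile_sub_sub a (t - s), ← heatProfile_sub_sub a t]
    refine (heatProfile_mul_heatProfile_le_of_le_half hs hst (sub_mem hx) (sub_mem hy)
      (sub_mem hz) (by linarith)).trans ?_
    rw [heatProfile_sub_sub]
    calc _ ≤ 262144 * heatProfile a t x y * (8 * z * bridgeMajorant a x z s) := by
          gcongr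
          linarith
      _ = 2097152 * heatProfile a t x y * (z * bridgeMajorant a x z s) := by ring
  · refine (heatProfile_mul_heatProfile_le_of_four_mul_le hs hst hx hy hz hzx).trans ?_
    gcongr
    · norm_num
    · linarith [density_nonneg hz]

end ProfileProduct

section BridgeTimeIntegral

variable {a r s t x y z : ℝ}

lemma hasDerivAt_two_mul_arctan_sqrt_div (hr : 0 < r) (hs : 0 < s) :
    HasDerivAt (fun s ↦ 2 * arctan (√s / r)) (arctanDensity r s) s := by
  refine (((hasDerivAt_sqrt hs.ne').div_const r).arctan.const_mul 2).congr_deriv ?_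
  have := sqrt_pos.2 hs
  rw [arctanDensity, div_pow, sq_sqrt hs.le]
  field_simp
  ring

lemma intervalIntegrable_arctanDensity (hr : 0 < r) (ht : 0 ≤ t) :
    IntervalIntegrable (arctanDensity r) volume 0 t := by
  rw [intervalIntegrable_iff_integrableOn_Ioc_of_le ht]
  exact intervalIntegral.integrableOn_deriv_of_nonneg
    (Continuous.continuousOn (f := fun s ↦ 2 * arctan (√s / r)) (by fun_prop))
    (fun s hs ↦ hasDerivAt_two_mul_arctan_sqrt_div hr hs.1)
    fun s hs ↦ arctanDensity_nonneg hr.le hs.1.le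

lemma integral_arctanDensity_le_pi (hr : 0 < r) (ht : 0 ≤ t) :
    ∫ s in 0..t, arctanDensity r s ≤ π := by
  rw [intervalIntegral.integral_eq_sub_of_hasDerivAt_of_le ht
    (Continuous.continuousOn (f := fun s ↦ 2 * arctan (√s / r)) (by fun_prop))
    (fun s hs ↦ hasDerivAt_two_mul_arctan_sqrt_div hr hs.1)
    (intervalIntegrable_arctanDensity hr ht), sqrt_zero, zero_div, arctan_zero]
  linarith [arctan_lt_pi_div_two (√t / r)]

lemma bridgeMajorant_nonneg (hs : 0 ≤ s) (hx : x ∈ Icc 0 a) (hz : z ∈ Icc 0 a) :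
    0 ≤ bridgeMajorant a x z s :=
  add_nonneg (add_nonneg (add_nonneg (arctanDensity_nonneg hx.1 hs)
    (arctanDensity_nonneg hz.1 hs)) (arctanDensity_nonneg (sub_nonneg.2 hx.2) hs))
    (arctanDensity_nonneg (sub_nonneg.2 hz.2) hs)

lemma intervalIntegrable_bridgeMajorant (ht : 0 ≤ t) (hx : x ∈ Ioo 0 a) (hz : z ∈ Ioo 0 a) :
    IntervalIntegrable (bridgeMajorant a x z) volume 0 t :=
  (((intervalIntegrable_arctanDensity hx.1 ht).add
    (intervalIntegrable_arctanDensity hz.1 ht)).add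
    (intervalIntegrable_arctanDensity (sub_pos.2 hx.2) ht)).add
    (intervalIntegrable_arctanDensity (sub_pos.2 hz.2) ht)

lemma integral_bridgeMajorant_le (ht : 0 ≤ t) (hx : x ∈ Ioo 0 a) (hz : z ∈ Ioo 0 a) :
    ∫ s in 0..t, bridgeMajorant a x z s ≤ 4 * π := by
  have integrable {r : ℝ} (hr : 0 < r) := intervalIntegrable_arctanDensity hr ht
  have integral_le {r : ℝ} (hr : 0 < r) := integral_arctanDensity_le_pi hr ht
  have hx' : 0 < a - x := sub_pos.2 hx.2
  have hz' : 0 < a - z := sub_pos.2 hz.2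
  unfold bridgeMajorant
  rw [intervalIntegral.integral_add
      (((integrable hx.1).add (integrable hz.1)).add (integrable hx')) (integrable hz'),
    intervalIntegral.integral_add ((integrable hx.1).add (integrable hz.1)) (integrable hx'),
    intervalIntegral.integral_add (integrable hx.1) (integrable hz.1)]
  linarith [integral_le hx.1, integral_le hz.1, integral_le hx', integral_le hz']

/-- A majorant, up to the factor `z`, of the density at `z` of the taboo bridge from `x` to `y` of
length `t`, as a function of the time `s`. -/
noncomputable def symmBridgeMajorant (a t x y z s : ℝ) : ℝ :=
  bridgeMajorant a x z s + bridgeMajorant a y z (t - s)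

lemma intervalIntegrable_symmBridgeMajorant (ht : 0 ≤ t) (hx : x ∈ Ioo 0 a) (hy : y ∈ Ioo 0 a)
    (hz : z ∈ Ioo 0 a) : IntervalIntegrable (symmBridgeMajorant a t x y z) volume 0 t := by
  have reversed := ((intervalIntegrable_bridgeMajorant ht hy hz).comp_sub_left t).symm
  rw [sub_zero, sub_self] at reversed
  exact (intervalIntegrable_bridgeMajorant ht hx hz).add reversed

lemma integral_symmBridgeMajorant_le (ht : 0 ≤ t) (hx : x ∈ Ioo 0 a) (hy : y ∈ Ioo 0 a)
    (hz : z ∈ Ioo 0 a) : ∫ s in 0..t, symmBridgeMajorant a t x y z s ≤ 8 * π := by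
  have reversed := ((intervalIntegrable_bridgeMajorant ht hy hz).comp_sub_left t).symm
  rw [sub_zero, sub_self] at reversed
  unfold symmBridgeMajorant
  rw [intervalIntegral.integral_add (intervalIntegrable_bridgeMajorant ht hx hz) reversed,
    intervalIntegral.integral_comp_sub_left (bridgeMajorant a y z), sub_self, sub_zero]
  linarith [integral_bridgeMajorant_le ht hx hz, integral_bridgeMajorant_le ht hy hz]

end BridgeTimeIntegral

section KernelContinuity

open HurwitzZeta

lemma continuousAt_cosKernel (b : ℝ) {τ : ℝ} (hτ : 0 < τ) :
    ContinuousAt (fun p : ℝ × ℝ ↦ cosKernel p.1 p.2) (b, τ) := by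
  refine Complex.continuous_re.continuousAt.comp
    (f := fun p : ℝ × ℝ ↦ (cosKernel p.1 p.2 : ℂ)) ?_
  simp only [cosKernel_def]
  exact (continuousAt_jacobiTheta₂ (b : ℂ) (τ := Complex.I * τ) (by simpa)).comp (x := (b, τ))
    (f := fun p : ℝ × ℝ ↦ ((p.1 : ℂ), Complex.I * (p.2 : ℂ)))
    (Continuous.continuousAt (by fun_prop))

lemma continuousAt_pker {a t : ℝ} (ha : 0 < a) (ht : 0 < t) (x y : ℝ) :
    ContinuousAt (fun p : ℝ × ℝ × ℝ ↦ pker a p.1 p.2.1 p.2.2) (t, x, y) := by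
  have hτ : 0 < π * t / (2 * a ^ 2) := by positivity
  have theta_continuousAt {g : ℝ × ℝ × ℝ → ℝ} (hg : Continuous g) :
      ContinuousAt (fun p : ℝ × ℝ × ℝ ↦ cosKernel (g p : ℝ) (π * p.1 / (2 * a ^ 2))) (t, x, y) :=
    (continuousAt_cosKernel (g (t, x, y)) hτ).comp
      (f := fun p : ℝ × ℝ × ℝ ↦ (g p, π * p.1 / (2 * a ^ 2))) (by fun_prop)
  have eventually_eq : (fun p : ℝ × ℝ × ℝ ↦ pker a p.1 p.2.1 p.2.2) =ᶠ[nhds (t, x, y)] _ :=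
    (continuousAt_fst.eventually (lt_mem_nhds ht)).mono fun p hp ↦ pker_eq_cosKernel_sub ha hp _ _
  exact (((theta_continuousAt (by fun_prop)).sub (theta_continuousAt (by fun_prop))).div_const
    (2 * a)).congr eventually_eq.symm

lemma continuousOn_pker_mul_pker {a : ℝ} (ha : 0 < a) (t x y : ℝ) :
    ContinuousOn (fun p : ℝ × ℝ ↦ pker a p.1 x p.2 * pker a (t - p.1) p.2 y)
      (Ioo 0 t ×ˢ univ) := by
  intro p hp
  refine ContinuousAt.continuousWithinAt (ContinuousAt.mul ?_ ?_)
  · exact (continuousAt_pker ha hp.1.1 x p.2).comp (f := fun p : ℝ × ℝ ↦ (p.1, x, p.2))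
      (by fun_prop)
  · exact (continuousAt_pker ha (sub_pos.2 hp.1.2) p.2 y).comp
      (f := fun p : ℝ × ℝ ↦ (t - p.1, p.2, y)) (by fun_prop)

end KernelContinuity

section LocalTime

variable {a s t x y z : ℝ}

lemma pker_nonneg (ha : 0 < a) (ht : 0 < t) (hta : t ≤ a ^ 2) (hx : x ∈ Ioo 0 a)
    (hy : y ∈ Ioo 0 a) : 0 ≤ pker a t x y := by
  obtain ⟨K, hK, comparable⟩ := exists_pker_comparable_heatProfile
  exact nonneg_of_mul_nonneg_right ((heatProfile_nonneg ht.le (Ioo_subset_Icc_self hx)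
    (Ioo_subset_Icc_self hy)).trans (comparable a t x y ha ht hta hx hy).1) hK

lemma exists_pker_mul_pker_le_bridgeMajorant : ∃ C : ℝ, 0 < C ∧ ∀ a s t x y z : ℝ, 0 < a →
    0 < s → 2 * s ≤ t → t ≤ a ^ 2 → x ∈ Ioo 0 a → y ∈ Ioo 0 a → z ∈ Ioo 0 a →
      pker a s x z * pker a (t - s) z y ≤ C * pker a t x y * (z * bridgeMajorant a x z s) := by
  obtain ⟨K, hK, comparable⟩ := exists_pker_comparable_heatProfile
  refine ⟨K * K * (2097152 * K), by positivity, fun a s t x y z ha hs hst hta hx hy hz ↦ ?_⟩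
  have first := (comparable a s x z ha hs (by linarith) hx hz).2
  have second := (comparable a (t - s) z y ha (by linarith) (by linarith) hz hy).2
  have whole := (comparable a t x y ha (by linarith) hta hx hy).1
  have first_nonneg := heatProfile_nonneg hs.le (Ioo_subset_Icc_self hx) (Ioo_subset_Icc_self hz)
  have := bridgeMajorant_nonneg hs.le (Ioo_subset_Icc_self hx) (Ioo_subset_Icc_self hz)
  have := hz.1
  calc pker a s x z * pker a (t - s) z y
      ≤ K * heatProfile a s x z * (K * heatProfile a (t - s) z y) :=
        mul_le_mul first second (pker_nonneg ha (by linarith) (by linarith) hz hy)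
          (mul_nonneg hK.le first_nonneg)
    _ = K * K * (heatProfile a s x z * heatProfile a (t - s) z y) := by ring
    _ ≤ K * K * (2097152 * heatProfile a t x y * (z * bridgeMajorant a x z s)) :=
        mul_le_mul_of_nonneg_left
          (heatProfile_mul_heatProfile_le_bridgeMajorant hs hst hx hy hz) (by positivity)
    _ ≤ K * K * (2097152 * (K * pker a t x y) * (z * bridgeMajorant a x z s)) := by gcongr
    _ = K * K * (2097152 * K) * pker a t x y * (z * bridgeMajorant a x z s) := by ring

lemma exists_pker_mul_pker_le_symmBridgeMajorant : ∃ C : ℝ, 0 < C ∧ ∀ a s t x y z : ℝ, 0 < a →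
    s ∈ Ioo 0 t → t ≤ a ^ 2 → x ∈ Ioo 0 a → y ∈ Ioo 0 a → z ∈ Ioo 0 a →
      pker a s x z * pker a (t - s) z y ≤
        C * pker a t x y * (z * symmBridgeMajorant a t x y z s) := by
  obtain ⟨C, hC, product_le⟩ := exists_pker_mul_pker_le_bridgeMajorant
  refine ⟨C, hC, fun a s t x y z ha hs hta hx hy hz ↦ ?_⟩
  have hts : 0 < t - s := sub_pos.2 hs.2
  have factor_nonneg : 0 ≤ C * pker a t x y :=
    mul_nonneg hC.le (pker_nonneg ha (hs.1.trans hs.2) hta hx hy)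
  have majorant_nonneg {u r : ℝ} (hu : u ∈ Ioo 0 a) (hr : 0 < r) : 0 ≤ bridgeMajorant a u z r :=
    bridgeMajorant_nonneg hr.le (Ioo_subset_Icc_self hu) (Ioo_subset_Icc_self hz)
  unfold symmBridgeMajorant
  rcases le_total (2 * s) t with first_half | second_half
  · refine (product_le a s t x y z ha hs.1 first_half hta hx hy hz).trans
      (mul_le_mul_of_nonneg_left (mul_le_mul_of_nonneg_left ?_ hz.1.le) factor_nonneg)
    exact le_add_of_nonneg_right (majorant_nonneg hy hts)
  · have reversed := product_le a (t - s) t y x z ha hts (by linarith) hta hy hx hz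
    rw [sub_sub_cancel, pker_symm a (t - s) y z, pker_symm a s z x, pker_symm a t y x,
      mul_comm (pker a (t - s) z y)] at reversed
    refine reversed.trans
      (mul_le_mul_of_nonneg_left (mul_le_mul_of_nonneg_left ?_ hz.1.le) factor_nonneg)
    exact le_add_of_nonneg_left (majorant_nonneg hx hs.1)

lemma pker_mul_pker_nonneg (ha : 0 < a) (hs : s ∈ Ioo 0 t) (hta : t ≤ a ^ 2) (hx : x ∈ Ioo 0 a)
    (hy : y ∈ Ioo 0 a) (hz : z ∈ Ioo 0 a) : 0 ≤ pker a s x z * pker a (t - s) z y :=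
  mul_nonneg (pker_nonneg ha hs.1 (hs.2.le.trans hta) hx hz)
    (pker_nonneg ha (sub_pos.2 hs.2) (by linarith [hs.1]) hz hy)

lemma integrableOn_pker_mul_pker (ha : 0 < a) (hta : t ≤ a ^ 2) (hx : x ∈ Ioo 0 a)
    (hy : y ∈ Ioo 0 a) (hz : z ∈ Ioo 0 a) :
    IntegrableOn (fun s ↦ pker a s x z * pker a (t - s) z y) (Ioo 0 t) := by
  obtain ⟨C, -, product_le⟩ := exists_pker_mul_pker_le_symmBridgeMajorant
  rcases le_or_gt t 0 with ht | ht
  · simp [Ioo_eq_empty ht.not_gt]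
  have majorant_integrable := (intervalIntegrable_iff_integrableOn_Ioo_of_le ht.le).1
    (((intervalIntegrable_symmBridgeMajorant ht.le hx hy hz).const_mul z).const_mul
      (C * pker a t x y))
  refine majorant_integrable.mono' ?_ ((ae_restrict_mem measurableSet_Ioo).mono fun s hs ↦ ?_)
  · exact ((continuousOn_pker_mul_pker ha t x y).comp (f := fun s ↦ (s, z)) (by fun_prop)
      fun s hs ↦ ⟨hs, mem_univ z⟩).aestronglyMeasurable measurableSet_Ioo
  · rw [norm_of_nonneg (pker_mul_pker_nonneg ha hs hta hx hy hz)]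
    exact product_le a s t x y z ha hs hta hx hy hz

lemma exists_integral_pker_mul_pker_le : ∃ C : ℝ, 0 < C ∧ ∀ a t x y z : ℝ, 0 < a → 0 < t →
    t ≤ a ^ 2 → x ∈ Ioo 0 a → y ∈ Ioo 0 a → z ∈ Ioo 0 a →
      ∫ s in Ioo 0 t, pker a s x z * pker a (t - s) z y ≤ C * z * pker a t x y := by
  obtain ⟨C, hC, product_le⟩ := exists_pker_mul_pker_le_symmBridgeMajorant
  refine ⟨C * (8 * π), by positivity, fun a t x y z ha ht hta hx hy hz ↦ ?_⟩
  have := pker_nonneg ha ht hta hx hy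
  have := hz.1
  have majorant_integrable := (intervalIntegrable_iff_integrableOn_Ioo_of_le ht.le).1
    (((intervalIntegrable_symmBridgeMajorant ht.le hx hy hz).const_mul z).const_mul
      (C * pker a t x y))
  calc ∫ s in Ioo 0 t, pker a s x z * pker a (t - s) z y
      ≤ ∫ s in Ioo 0 t, C * pker a t x y * (z * symmBridgeMajorant a t x y z s) :=
        setIntegral_mono_on (integrableOn_pker_mul_pker ha hta hx hy hz) majorant_integrable
          measurableSet_Ioo fun s hs ↦ product_le a s t x y z ha hs hta hx hy hz
    _ = C * pker a t x y * (z * ∫ s in 0..t, symmBridgeMajorant a t x y z s) := by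
        rw [integral_const_mul, integral_const_mul, intervalIntegral.integral_of_le ht.le,
          integral_Ioc_eq_integral_Ioo]
    _ ≤ C * pker a t x y * (z * (8 * π)) := by
        gcongr
        exact integral_symmBridgeMajorant_le ht.le hx hy hz
    _ = C * (8 * π) * z * pker a t x y := by ring

end LocalTime

section WeightedLocalTime

variable {a t x y : ℝ} {w : ℝ → ℝ}

lemma aestronglyMeasurable_of_integrableOn_mul {s : Set ℝ} (hs : MeasurableSet s)
    (h0 : (0 : ℝ) ∉ s) (hw : IntegrableOn (fun z ↦ z * w z) s) :
    AEStronglyMeasurable w (volume.restrict s) := by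
  refine (measurable_inv.aestronglyMeasurable.mul hw.aestronglyMeasurable).congr
    ((ae_restrict_mem hs).mono fun z hz ↦ inv_mul_cancel_left₀ (ne_of_mem_of_not_mem hz h0) _)

lemma integrableOn_mul_abs (hw : IntegrableOn (fun z ↦ z * w z) (Ioo 0 a)) :
    IntegrableOn (fun z ↦ z * |w z|) (Ioo 0 a) :=
  hw.abs.congr ((ae_restrict_mem measurableSet_Ioo).mono fun z hz ↦
    (abs_mul z (w z)).trans (by rw [abs_of_pos hz.1]))

lemma abs_mul_integral_pker_mul_pker_le {C z : ℝ} (ha : 0 < a) (hta : t ≤ a ^ 2)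
    (hx : x ∈ Ioo 0 a) (hy : y ∈ Ioo 0 a) (hz : z ∈ Ioo 0 a)
    (hC : ∫ s in Ioo 0 t, pker a s x z * pker a (t - s) z y ≤ C * z * pker a t x y) (b : ℝ) :
    |b * ∫ s in Ioo 0 t, pker a s x z * pker a (t - s) z y| ≤
      C * pker a t x y * (z * |b|) := by
  rw [abs_mul, abs_of_nonneg (setIntegral_nonneg measurableSet_Ioo fun s hs ↦
    pker_mul_pker_nonneg ha hs hta hx hy hz)]
  linarith [mul_le_mul_of_nonneg_left hC (abs_nonneg b)]

lemma integrable_pker_mul_weight_mul_pker (ha : 0 < a) (ht : 0 < t) (hta : t ≤ a ^ 2)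
    (hx : x ∈ Ioo 0 a) (hy : y ∈ Ioo 0 a) (hw : IntegrableOn (fun z ↦ z * w z) (Ioo 0 a)) :
    Integrable (fun p : ℝ × ℝ ↦ pker a p.1 x p.2 * w p.2 * pker a (t - p.1) p.2 y)
      ((volume.restrict (Ioo 0 t)).prod (volume.restrict (Ioo 0 a))) := by
  obtain ⟨C, -, local_time_le⟩ := exists_integral_pker_mul_pker_le
  simp_rw [mul_right_comm _ (w _), mul_comm _ (w _)]
  have kernel_measurable :
      AEStronglyMeasurable (fun p : ℝ × ℝ ↦ pker a p.1 x p.2 * pker a (t - p.1) p.2 y)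
        ((volume.restrict (Ioo 0 t)).prod (volume.restrict (Ioo 0 a))) := by
    rw [Measure.prod_restrict]
    exact ((continuousOn_pker_mul_pker ha t x y).mono
      (prod_mono_right (subset_univ _))).aestronglyMeasurable
        (measurableSet_Ioo.prod measurableSet_Ioo)
  have weight_measurable := aestronglyMeasurable_of_integrableOn_mul measurableSet_Ioo
    (fun h ↦ h.1.false) hw
  have measurable := weight_measurable.comp_snd.mul kernel_measurable
  have norm_bound : ∀ᵐ z ∂volume.restrict (Ioo 0 a),
      ‖∫ s in Ioo 0 t, ‖w z * (pker a s x z * pker a (t - s) z y)‖‖ ≤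
        C * pker a t x y * (z * |w z|) := by
    filter_upwards [ae_restrict_mem measurableSet_Ioo] with z hz
    rw [setIntegral_congr_fun (g := fun s ↦ |w z| * (pker a s x z * pker a (t - s) z y))
      measurableSet_Ioo fun s hs ↦ by
        rw [norm_mul, norm_of_nonneg (pker_mul_pker_nonneg ha hs hta hx hy hz), norm_eq_abs],
      integral_const_mul]
    simpa only [abs_abs, norm_eq_abs] using abs_mul_integral_pker_mul_pker_le ha hta hx hy hz
      (local_time_le a t x y z ha ht hta hx hy hz) |w z|
  refine (integrable_prod_iff' measurable).2
    ⟨(ae_restrict_mem measurableSet_Ioo).mono fun z hz ↦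
      (integrableOn_pker_mul_pker ha hta hx hy hz).const_mul (w z),
    ((integrableOn_mul_abs hw).const_mul (C * pker a t x y)).mono'
      measurable.norm.prod_swap.integral_prod_right' norm_bound⟩

end WeightedLocalTime

theorem stmt12_general : ∃ C : ℝ, 0 < C ∧ ∀ a : ℝ, 0 < a → ∀ w : ℝ → ℝ,
    IntervalIntegrable (fun z ↦ z * w z) volume 0 a →
      ∀ x ∈ Ioo 0 a, ∀ y ∈ Ioo 0 a, ∀ t : ℝ, 0 < t → t ≤ a ^ 2 →
        |∫ s in 0..t, ∫ z in 0..a, pker a s x z * w z * pker a (t - s) z y| ≤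
          C * (∫ z in 0..a, z * |w z|) * pker a t x y := by
  obtain ⟨C, hC, local_time_le⟩ := exists_integral_pker_mul_pker_le
  refine ⟨C, hC, fun a ha w hw x hx y hy t ht hta ↦ ?_⟩
  rw [intervalIntegrable_iff_integrableOn_Ioo_of_le ha.le] at hw
  simp_rw [intervalIntegral.integral_of_le ha.le, intervalIntegral.integral_of_le ht.le,
    integral_Ioc_eq_integral_Ioo]
  rw [integral_integral_swap (integrable_pker_mul_weight_mul_pker ha ht hta hx hy hw)]
  simp_rw [mul_right_comm _ (w _), mul_comm _ (w _), integral_const_mul]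
  rw [← norm_eq_abs]
  refine (norm_integral_le_of_norm_le ((integrableOn_mul_abs hw).const_mul (C * pker a t x y))
    ((ae_restrict_mem measurableSet_Ioo).mono fun z hz ↦ ?_)).trans_eq ?_
  · exact abs_mul_integral_pker_mul_pker_le ha hta hx hy hz
      (local_time_le a t x y z ha ht hta hx hy hz) (w z)
  · rw [integral_const_mul]
    ring

lemma integral_mul_exp_neg_mul_le {c : ℝ} (hc : 0 < c) {a : ℝ} (ha : 0 ≤ a) :
    ∫ z in 0..a, z * exp (-c * z) ≤ 1 / c ^ 2 := by
  have hasDerivAt (z : ℝ) :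
      HasDerivAt (fun z ↦ -(z / c + 1 / c ^ 2) * exp (-c * z)) (z * exp (-c * z)) z := by
    refine ((((hasDerivAt_id z).div_const c).add_const (1 / c ^ 2)).neg.mul
      ((hasDerivAt_id z).const_mul (-c)).exp).congr_deriv ?_
    simp only [id_eq, Pi.neg_apply]
    field_simp
    ring
  rw [intervalIntegral.integral_eq_sub_of_hasDerivAt (fun z _ ↦ hasDerivAt z)
    (Continuous.intervalIntegrable (by fun_prop) _ _)]
  have : 0 ≤ (a / c + 1 / c ^ 2) * exp (-c * a) := by positivity
  simp only [mul_zero, exp_zero, zero_div]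
  linarith

/-- Taboo-bridge estimate for `0 < t ≤ a²`: the expectation of
`∫_0^t e^{−cX_s} ds` under the taboo bridge from `x` to `y` of length `t` is at
most a constant `C` depending only on `c`. -/
theorem stmt12 (c : ℝ) (hc : 0 < c) :
    ∃ C : ℝ, 0 < C ∧ ∀ a : ℝ, 0 < a → ∀ x ∈ Set.Ioo (0:ℝ) a, ∀ y ∈ Set.Ioo (0:ℝ) a,
      ∀ t : ℝ, 0 < t → t ≤ a^2 →
      (∫ s in (0:ℝ)..t, ∫ z in (0:ℝ)..a,
          pker a s x z * Real.exp (-c * z) * pker a (t - s) z y) ≤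
        C * pker a t x y := by
  obtain ⟨C, hC, weighted_le⟩ := stmt12_general
  refine ⟨C * (1 / c ^ 2), by positivity, fun a ha x hx y hy t ht hta ↦ ?_⟩
  have := pker_nonneg ha ht hta hx hy
  have bound := (le_abs_self _).trans (weighted_le a ha (fun z ↦ exp (-c * z))
    (Continuous.intervalIntegrable (by fun_prop) _ _) x hx y hy t ht hta)
  simp only [abs_exp] at bound
  grw [integral_mul_exp_neg_mul_le hc ha.le] at bound
  exact bound
end

section
/- Let a ≥ π. For every t > 0 and every x ∈ [0,a]: ∫_0^a 𝔭_t(x,y)·w_Z(y) dy = w_Z(x). (This exact invariance expresses that the process Z_t = Σ_u w_Z(X_u(t)) over surviving particles is a martingale for the associated branching Brownian motion.) -/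
open Real MeasureTheory Set Filter

/-- `μ = √(1 − π²/a²)`. -/
noncomputable def muFn (a : ℝ) : ℝ := Real.sqrt (1 - π^2 / a^2)

/-- `w_Z(x) = a·e^{μ(x−a)}·sin(πx/a)`. -/
noncomputable def wZ (a x : ℝ) : ℝ := a * Real.exp (muFn a * (x - a)) * Real.sin (π * x / a)

/-- Density of the branching Brownian motion with drift `−μ` before absorption
at `0` and `a`: `𝔭_t(x,y) = e^{μ(x−y)+π²t/(2a²)}·p^a_t(x,y)`. -/
noncomputable def pdens (a t x y : ℝ) : ℝ :=
  Real.exp (muFn a * (x - y) + π^2 * t / (2 * a^2)) * pker a t x y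

/-!
The functions `sin (π n y / a)`, `n ≥ 1`, are orthogonal on `[0, a]`, so integrating the sine series
`pker a t x ·` against one of them isolates a single term: each is an eigenfunction of the killed
heat semigroup, with eigenvalue `exp (-π² n² t / (2 a²))`. For the first one, the branching factor
`exp (π² t / (2 a²))` compensates the decay exactly, while the exponential tilts by the drift in
`pdens` and `wZ` telescope.
-/

/-- The `n`-th Dirichlet eigenfunction of `(1/2) d²/dx²` on `(0, a)`, not normalized. As in `pker`,
the index starts at `0`, so that the frequency is `n + 1`. -/
noncomputable def dirichletEigenfunction (a : ℝ) (n : ℕ) (x : ℝ) : ℝ :=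
  sin (π * ((n : ℝ) + 1) * x / a)

/-- The eigenvalue, on `dirichletEigenfunction a n`, of the semigroup at time `t` of Brownian motion
killed upon exiting `(0, a)`; it is written as in the series `pker`. -/
noncomputable def killedHeatEigenvalue (a t : ℝ) (n : ℕ) : ℝ :=
  exp (-(π ^ 2) * ((n : ℝ) + 1) ^ 2 * t / (2 * a ^ 2))

section

variable {a t : ℝ}

lemma dirichletEigenfunction_zero (a x : ℝ) : dirichletEigenfunction a 0 x = sin (π * x / a) := by
  simp [dirichletEigenfunction]

lemma continuous_dirichletEigenfunction (a : ℝ) (n : ℕ) :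
    Continuous (dirichletEigenfunction a n) := by
  unfold dirichletEigenfunction
  fun_prop

lemma abs_dirichletEigenfunction_le_one (a : ℝ) (n : ℕ) (x : ℝ) :
    |dirichletEigenfunction a n x| ≤ 1 :=
  abs_sin_le_one _

lemma integral_cos_int_mul_pi_div_mul (ha : a ≠ 0) {k : ℤ} (hk : k ≠ 0) :
    ∫ y in (0 : ℝ)..a, cos (k * π / a * y) = 0 := by
  have hc : (k : ℝ) * π / a ≠ 0 := by positivity
  rw [intervalIntegral.integral_comp_mul_left cos hc, integral_cos, div_mul_cancel₀ _ ha,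
    sin_int_mul_pi, mul_zero, sin_zero, sub_zero, smul_zero]

lemma dirichletEigenfunction_mul (a : ℝ) (m n : ℕ) (y : ℝ) :
    dirichletEigenfunction a m y * dirichletEigenfunction a n y =
      (cos (((m - n : ℤ) : ℝ) * π / a * y) - cos (((m + n + 2 : ℤ) : ℝ) * π / a * y)) / 2 := by
  have hsub : ((m - n : ℤ) : ℝ) * π / a * y =
      π * ((m : ℝ) + 1) * y / a - π * ((n : ℝ) + 1) * y / a := by
    push_cast; ring
  have hadd : ((m + n + 2 : ℤ) : ℝ) * π / a * y =
      π * ((m : ℝ) + 1) * y / a + π * ((n : ℝ) + 1) * y / a := by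
    push_cast; ring
  rw [dirichletEigenfunction, dirichletEigenfunction, hsub, hadd, ← two_mul_sin_mul_sin]
  ring

lemma integral_dirichletEigenfunction_mul (ha : a ≠ 0) (m n : ℕ) :
    ∫ y in (0 : ℝ)..a, dirichletEigenfunction a m y * dirichletEigenfunction a n y =
      if m = n then a / 2 else 0 := by
  have hcos (k : ℤ) : IntervalIntegrable (fun y ↦ cos (k * π / a * y)) volume 0 a :=
    Continuous.intervalIntegrable (by fun_prop) _ _
  simp_rw [dirichletEigenfunction_mul]
  rw [intervalIntegral.integral_div, intervalIntegral.integral_sub (hcos _) (hcos _),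
    integral_cos_int_mul_pi_div_mul ha (by lia : (m + n + 2 : ℤ) ≠ 0), sub_zero]
  split_ifs with hmn
  · simp [hmn]
  · rw [integral_cos_int_mul_pi_div_mul ha (by lia), zero_div]

lemma integral_tsum_mul_dirichletEigenfunction (ha : a ≠ 0) {c : ℕ → ℝ} (hc : Summable c) (k : ℕ) :
    ∫ y in (0 : ℝ)..a,
        (∑' n, c n * dirichletEigenfunction a n y) * dirichletEigenfunction a k y =
      c k * (a / 2) := by
  let F (n : ℕ) (y : ℝ) : ℝ :=
    c n * (dirichletEigenfunction a n y * dirichletEigenfunction a k y)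
  have hF_bound (n : ℕ) (y : ℝ) : ‖F n y‖ ≤ |c n| := by
    rw [norm_mul, norm_mul]
    exact mul_le_of_le_one_right (abs_nonneg _) <|
      mul_le_one₀ (abs_dirichletEigenfunction_le_one a n y) (abs_nonneg _)
        (abs_dirichletEigenfunction_le_one a k y)
  have hF_cont (n : ℕ) : Continuous (F n) :=
    continuous_const.mul <|
      (continuous_dirichletEigenfunction a n).mul (continuous_dirichletEigenfunction a k)
  have hF_integral (n : ℕ) : ∫ y in (0 : ℝ)..a, F n y = if n = k then c k * (a / 2) else 0 := by
    rw [intervalIntegral.integral_const_mul, integral_dirichletEigenfunction_mul ha]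
    split_ifs with hnk
    · rw [hnk]
    · rw [mul_zero]
  have hsum : HasSum (fun n ↦ ∫ y in (0 : ℝ)..a, F n y) (∫ y in (0 : ℝ)..a, ∑' n, F n y) :=
    intervalIntegral.hasSum_integral_of_dominated_convergence (fun n _ ↦ |c n|)
      (fun n ↦ (hF_cont n).aestronglyMeasurable)
      (fun n ↦ .of_forall fun y _ ↦ hF_bound n y)
      (.of_forall fun _ _ ↦ hc.abs) intervalIntegrable_const
      (.of_forall fun y _ ↦ (Summable.of_norm_bounded hc.abs (hF_bound · y)).hasSum)
  simp_rw [hF_integral] at hsum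
  simp_rw [← tsum_mul_right, mul_assoc]
  exact hsum.unique (hasSum_ite_eq k _)

lemma killedHeatEigenvalue_pos (a t : ℝ) (n : ℕ) : 0 < killedHeatEigenvalue a t n :=
  exp_pos _

lemma summable_killedHeatEigenvalue (ha : a ≠ 0) (ht : 0 < t) :
    Summable (killedHeatEigenvalue a t) := by
  have hrate : -(π ^ 2 * t / (2 * a ^ 2)) < 0 := neg_neg_of_pos (by positivity)
  have hsq (n : ℕ) : (n : ℝ) ≤ ((n : ℝ) + 1) ^ 2 := by nlinarith [n.cast_nonneg (α := ℝ)]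
  refine (summable_exp_nat_mul_of_ge hrate hsq).congr fun n ↦ ?_
  rw [killedHeatEigenvalue]
  ring_nf

lemma summable_killedHeatEigenvalue_mul_dirichletEigenfunction (ha : a ≠ 0) (ht : 0 < t) (x : ℝ) :
    Summable fun n ↦ killedHeatEigenvalue a t n * dirichletEigenfunction a n x :=
  (summable_killedHeatEigenvalue ha ht).of_norm_bounded fun n ↦ by
    have hpos := killedHeatEigenvalue_pos a t n
    rw [norm_mul, norm_of_nonneg hpos.le]
    exact mul_le_of_le_one_right hpos.le (abs_dirichletEigenfunction_le_one a n x)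

theorem integral_pker_mul_dirichletEigenfunction (ha : a ≠ 0) (ht : 0 < t) (k : ℕ) (x : ℝ) :
    ∫ y in (0 : ℝ)..a, pker a t x y * dirichletEigenfunction a k y =
      killedHeatEigenvalue a t k * dirichletEigenfunction a k x := by
  have hseries (y : ℝ) : pker a t x y = 2 / a * ∑' n,
      killedHeatEigenvalue a t n * dirichletEigenfunction a n x * dirichletEigenfunction a n y :=
    rfl
  simp_rw [hseries, mul_assoc (2 / a)]
  rw [intervalIntegral.integral_const_mul, integral_tsum_mul_dirichletEigenfunction ha
    (summable_killedHeatEigenvalue_mul_dirichletEigenfunction ha ht x)]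
  field_simp

theorem stmt13_general (ha : a ≠ 0) (ht : 0 < t) (μ x : ℝ) :
    ∫ y in (0 : ℝ)..a, exp (μ * (x - y) + π ^ 2 * t / (2 * a ^ 2)) * pker a t x y *
        (a * exp (μ * (y - a)) * sin (π * y / a)) =
      a * exp (μ * (x - a)) * sin (π * x / a) := by
  have htilt (y : ℝ) : exp (μ * (x - y) + π ^ 2 * t / (2 * a ^ 2)) * exp (μ * (y - a)) =
      exp (μ * (x - a)) * exp (π ^ 2 * t / (2 * a ^ 2)) := by
    rw [← exp_add, ← exp_add]
    ring_nf
  have hgrowth : exp (π ^ 2 * t / (2 * a ^ 2)) * killedHeatEigenvalue a t 0 = 1 := by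
    rw [killedHeatEigenvalue, ← exp_add, exp_eq_one_iff]
    push_cast
    ring
  simp_rw [← dirichletEigenfunction_zero]
  calc _ = ∫ y in (0 : ℝ)..a, a * exp (μ * (x - a)) * exp (π ^ 2 * t / (2 * a ^ 2)) *
        (pker a t x y * dirichletEigenfunction a 0 y) := by
        congr with y
        linear_combination a * pker a t x y * dirichletEigenfunction a 0 y * htilt y
    _ = a * exp (μ * (x - a)) * exp (π ^ 2 * t / (2 * a ^ 2)) *
        (killedHeatEigenvalue a t 0 * dirichletEigenfunction a 0 x) := by
        rw [intervalIntegral.integral_const_mul,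
          integral_pker_mul_dirichletEigenfunction ha ht]
    _ = a * exp (μ * (x - a)) * dirichletEigenfunction a 0 x := by
        linear_combination a * exp (μ * (x - a)) * dirichletEigenfunction a 0 x * hgrowth

end

/-- Exact invariance of `w_Z`: `∫_0^a 𝔭_t(x,y)·w_Z(y) dy = w_Z(x)` (martingale
property of `Z_t`). -/
theorem stmt13 (a : ℝ) (ha : π ≤ a) (t : ℝ) (ht : 0 < t)
    (x : ℝ) (hx : x ∈ Set.Icc 0 a) :
    ∫ y in (0:ℝ)..a, pdens a t x y * wZ a y = wZ a x :=
  stmt13_general (pi_pos.trans_le ha).ne' ht (muFn a) x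
end

section
/- There exists a universal constant C such that for every a ≥ π and every x ∈ [0,a]: (i) for every t > 0, ∫_0^a 𝔭_t(x,y)·w_Y(y) dy ≤ C·w_Y(x); and (ii) for every t ≥ a², ∫_0^a 𝔭_t(x,y)·w_Y(y) dy ≤ C·w_Z(x)/a. -/
open Real MeasureTheory Set Filter

/-- `w_Y(x) = e^{μ(x−a)}`. -/
noncomputable def wY (a x : ℝ) : ℝ := Real.exp (muFn a * (x - a))

/-!
Exponential tilting removes the drift, so both bounds concern `exp κ` times the survival
probability of Brownian motion killed at `0` and `a`, where `κ = π² t / (2 a²)`. Integrating the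
eigenfunction expansion keeps only the odd modes: with `u = π x / a`, this probability is
`4 / π * ∑ₖ exp (-κ (2k+1)²) / (2k+1) * sin ((2k+1) u)`.

For `κ ≤ 1` the sum is at most `2`, by cutting it at `N ≈ 1 / sin u`. Each of the first `N` terms
is at most `sin u`, because `|sin (m u)| ≤ m sin u`. The tail is at most `1` by Abel's inequality,
because the coefficients decrease and `sin u * sin ((2k+1) u) = sin² ((k+1) u) - sin² (k u)`
telescopes. For `κ ≥ 1`, comparing term by term with a geometric series bounds the sum by a multiple
of `exp (-κ) * sin u`.
-/

theorem abs_sin_natCast_mul_le (n : ℕ) (u : ℝ) : |sin (n * u)| ≤ n * |sin u| := by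
  induction n with
  | zero => simp
  | succ n ih =>
    calc |sin ((n + 1 : ℕ) * u)| = |sin (n * u) * cos u + cos (n * u) * sin u| := by
          rw [← sin_add]; push_cast; ring_nf
      _ ≤ |sin (n * u)| * |cos u| + |cos (n * u)| * |sin u| := by
          simpa only [abs_mul] using abs_add_le (sin (n * u) * cos u) (cos (n * u) * sin u)
      _ ≤ |sin (n * u)| * 1 + 1 * |sin u| := by gcongr <;> exact abs_cos_le_one _
      _ ≤ (n + 1 : ℕ) * |sin u| := by push_cast; linarith

theorem sin_sub_mul_sin_add (x y : ℝ) : sin (x - y) * sin (x + y) = sin x ^ 2 - sin y ^ 2 := by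
  rw [sin_sub, sin_add]
  linear_combination sin x ^ 2 * sin_sq_add_cos_sq y - sin y ^ 2 * sin_sq_add_cos_sq x

theorem sin_mul_sum_sin_odd (u : ℝ) (N n : ℕ) :
    ∑ k ∈ Finset.range n, sin u * sin ((2 * (N + k : ℕ) + 1) * u)
      = sin ((N + n : ℕ) * u) ^ 2 - sin (N * u) ^ 2 := by
  have telescope (k : ℕ) : sin u * sin ((2 * (N + k : ℕ) + 1) * u)
      = sin ((N + (k + 1) : ℕ) * u) ^ 2 - sin ((N + k : ℕ) * u) ^ 2 := by
    rw [← sin_sub_mul_sin_add]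
    push_cast
    ring_nf
  simp only [telescope, Finset.sum_range_sub fun k : ℕ ↦ sin ((N + k : ℕ) * u) ^ 2, add_zero]

theorem sum_range_mul_le_of_antitone {R : Type*} [CommRing R] [PartialOrder R] [IsOrderedRing R]
    {c f : ℕ → R} {B : R} (hc : Antitone c) (hc₀ : ∀ k, 0 ≤ c k)
    (hf : ∀ n, ∑ k ∈ Finset.range n, f k ≤ B) (n : ℕ) :
    ∑ k ∈ Finset.range n, c k * f k ≤ c 0 * B := by
  have by_parts : ∑ k ∈ Finset.range n, c k * f k
      ≤ (c 0 - c n) * B + c n * ∑ k ∈ Finset.range n, f k := by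
    induction n with
    | zero => simp
    | succ n ih =>
      have drop : 0 ≤ (c n - c (n + 1)) * (B - ∑ k ∈ Finset.range (n + 1), f k) :=
        mul_nonneg (sub_nonneg.2 (hc n.le_succ)) (sub_nonneg.2 (hf _))
      rw [Finset.sum_range_succ] at drop ⊢
      rw [Finset.sum_range_succ]
      linear_combination ih + drop
  calc ∑ k ∈ Finset.range n, c k * f k
      ≤ (c 0 - c n) * B + c n * ∑ k ∈ Finset.range n, f k := by_parts
    _ ≤ (c 0 - c n) * B + c n * B := by gcongr; exacts [hc₀ n, hf n]
    _ = c 0 * B := by ring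

section OddSineSum

theorem mul_sin_odd_le {A b u : ℝ} {k : ℕ} (hb : 0 ≤ b) (hbA : b ≤ A / (2 * k + 1))
    (hu : 0 ≤ sin u) : b * sin ((2 * k + 1) * u) ≤ A * sin u := by
  have sin_le : sin ((2 * k + 1) * u) ≤ (2 * k + 1) * sin u := by
    have := (le_abs_self _).trans (abs_sin_natCast_mul_le (2 * k + 1) u)
    rw [abs_of_nonneg hu] at this
    exact_mod_cast this
  calc b * sin ((2 * k + 1) * u) ≤ b * ((2 * k + 1) * sin u) := by gcongr
    _ ≤ A / (2 * k + 1) * ((2 * k + 1) * sin u) := by gcongr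
    _ = A * sin u := by field_simp

variable {c : ℕ → ℝ} {A u : ℝ}

theorem sum_range_mul_sin_odd_le_mul_sin (hc₀ : ∀ k, 0 ≤ c k)
    (hcA : ∀ k : ℕ, c k ≤ A / (2 * k + 1)) (hu : 0 ≤ sin u) (n : ℕ) :
    ∑ k ∈ Finset.range n, c k * sin ((2 * k + 1) * u) ≤ n * (A * sin u) := by
  simpa using Finset.sum_le_card_nsmul (Finset.range n) _ _
    fun k _ ↦ mul_sin_odd_le (hc₀ k) (hcA k) hu

theorem sin_mul_sum_range_mul_sin_odd_le (hc : Antitone c) (hc₀ : ∀ k, 0 ≤ c k) (N n : ℕ) :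
    sin u * ∑ k ∈ Finset.range n, c (N + k) * sin ((2 * (N + k : ℕ) + 1) * u) ≤ c N := by
  have partial_sum_le (m : ℕ) :
      ∑ k ∈ Finset.range m, sin u * sin ((2 * (N + k : ℕ) + 1) * u) ≤ 1 := by
    rw [sin_mul_sum_sin_odd]
    linarith [sin_sq_le_one ((N + m : ℕ) * u), sq_nonneg (sin (N * u))]
  have abel := sum_range_mul_le_of_antitone (c := fun k ↦ c (N + k))
    (fun i j hij ↦ hc (by lia)) (fun k ↦ hc₀ _) partial_sum_le n
  simpa only [Finset.mul_sum, mul_left_comm, add_zero, mul_one] using abel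

theorem sum_range_mul_sin_odd_le (hc : Antitone c) (hc₀ : ∀ k, 0 ≤ c k)
    (hcA : ∀ k : ℕ, c k ≤ A / (2 * k + 1)) (hu : 0 ≤ sin u) (n : ℕ) :
    ∑ k ∈ Finset.range n, c k * sin ((2 * k + 1) * u) ≤ 2 * A := by
  have hA : 0 ≤ A := by simpa using (hc₀ 0).trans (hcA 0)
  have head := sum_range_mul_sin_odd_le_mul_sin hc₀ hcA hu
  rcases hu.eq_or_lt with hu₀ | hu₀
  · calc _ ≤ n * (A * sin u) := head n
      _ ≤ 2 * A := by rw [← hu₀]; linarith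
  set N := ⌊1 / sin u⌋₊
  have hN : N * sin u ≤ 1 := (le_div_iff₀ hu₀).1 (Nat.floor_le (by positivity))
  have hN' : 1 < (N + 1) * sin u := (div_lt_iff₀ hu₀).1 (Nat.lt_floor_add_one _)
  have head_le {m : ℕ} (hm : m ≤ N) :
      ∑ k ∈ Finset.range m, c k * sin ((2 * k + 1) * u) ≤ A := by
    calc _ ≤ m * (A * sin u) := head m
      _ ≤ N * (A * sin u) := by gcongr
      _ = A * (N * sin u) := by ring
      _ ≤ A := mul_le_of_le_one_right hA hN
  rcases le_total n N with hn | hn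
  · linarith [head_le hn]
  obtain ⟨m, rfl⟩ := Nat.exists_eq_add_of_le hn
  have tail_le : ∑ k ∈ Finset.range m, c (N + k) * sin ((2 * (N + k : ℕ) + 1) * u) ≤ A := by
    refine le_of_mul_le_mul_left ?_ hu₀
    calc _ ≤ c N := sin_mul_sum_range_mul_sin_odd_le hc hc₀ N m
      _ ≤ A / (2 * N + 1) := hcA N
      _ ≤ sin u * A := by
        rw [div_le_iff₀ (by positivity)]
        nlinarith [mul_nonneg hA (mul_nonneg N.cast_nonneg hu)]
  rw [Finset.sum_range_add]
  linarith [head_le le_rfl]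

end OddSineSum

/-- The solution `h` of the heat equation `∂h/∂κ = ∂²h/∂u²` on `(0, π)` with zero boundary values
and initial value `π / 4`, as a sine series. Killed Brownian motion on an interval of any length
reduces to it by scaling. The definition is meant for `κ > 0`: at `κ = 0` the series converges
only conditionally, so `∑'` does not return its sum. -/
noncomputable def squareWaveHeat (κ u : ℝ) : ℝ :=
  ∑' k : ℕ, exp (-κ * (2 * k + 1) ^ 2) / (2 * k + 1) * sin ((2 * k + 1) * u)

section SquareWaveHeat

variable {κ u : ℝ}

theorem exp_neg_mul_add_one_sq_le (hκ : 0 ≤ κ) {m : ℝ} {k : ℕ} (hm : k ≤ m) :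
    exp (-κ * (m + 1) ^ 2) ≤ exp (-κ) * exp (-κ) ^ k := by
  have hk : (k : ℝ) + 1 ≤ (m + 1) ^ 2 := by nlinarith [k.cast_nonneg (α := ℝ)]
  rw [← exp_nat_mul, ← exp_add, exp_le_exp]
  nlinarith

theorem summable_exp_neg_mul_add_one_sq (hκ : 0 < κ) :
    Summable fun n : ℕ ↦ exp (-κ * (n + 1) ^ 2) :=
  .of_nonneg_of_le (fun _ ↦ (exp_pos _).le) (fun _ ↦ exp_neg_mul_add_one_sq_le hκ.le le_rfl)
    ((summable_geometric_of_lt_one (exp_pos _).le (exp_lt_one_iff.2 (neg_lt_zero.2 hκ))).mul_left _)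

theorem summable_squareWaveHeat (hκ : 0 < κ) (u : ℝ) :
    Summable fun k : ℕ ↦ exp (-κ * (2 * k + 1) ^ 2) / (2 * k + 1) * sin ((2 * k + 1) * u) := by
  have odd_modes : Summable fun k : ℕ ↦ exp (-κ * (2 * k + 1) ^ 2) := by
    simpa [Function.comp_def] using (summable_exp_neg_mul_add_one_sq hκ).comp_injective
      (mul_right_injective₀ (two_ne_zero (α := ℕ)))
  refine odd_modes.of_norm_bounded fun k ↦ ?_
  rw [norm_mul, norm_of_nonneg (by positivity)]
  exact (mul_le_of_le_one_right (by positivity) (abs_sin_le_one _)).trans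
    (div_le_self (exp_pos _).le (by linarith [k.cast_nonneg (α := ℝ)]))

theorem squareWaveHeat_le_two (hκ : 0 < κ) (hu : 0 ≤ sin u) : squareWaveHeat κ u ≤ 2 := by
  refine le_of_tendsto' (summable_squareWaveHeat hκ u).hasSum.tendsto_sum_nat fun n ↦ ?_
  refine (sum_range_mul_sin_odd_le (A := 1) ?_ (fun k ↦ by positivity) (fun k ↦ ?_) hu n).trans_eq
    (mul_one 2)
  · intro i j hij
    have hij' : 2 * (i : ℝ) + 1 ≤ 2 * j + 1 := by gcongr
    exact div_le_div₀ (exp_pos _).le (exp_le_exp.2 (by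
      rw [neg_mul, neg_mul, neg_le_neg_iff]; gcongr)) (by positivity) hij'
  · gcongr
    exact exp_le_one_iff.2 (mul_nonpos_of_nonpos_of_nonneg (by linarith) (sq_nonneg _))

theorem squareWaveHeat_le_sin_div (hκ : 0 < κ) (hu : 0 ≤ sin u) :
    squareWaveHeat κ u ≤ sin u / (exp κ - 1) := by
  have geometric := (hasSum_geometric_of_lt_one (exp_pos (-κ)).le
    (exp_lt_one_iff.2 (neg_lt_zero.2 hκ))).mul_left (sin u * exp (-κ))
  have geometric_sum : sin u * exp (-κ) * (1 - exp (-κ))⁻¹ = sin u / (exp κ - 1) := by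
    have := (sub_pos.2 (one_lt_exp_iff.2 hκ)).ne'
    rw [exp_neg]
    field_simp
  rw [← geometric_sum]
  refine hasSum_le (fun k ↦ ?_) (summable_squareWaveHeat hκ u).hasSum geometric
  calc _ ≤ exp (-κ * (2 * k + 1) ^ 2) * sin u := mul_sin_odd_le (by positivity) le_rfl hu
    _ ≤ exp (-κ) * exp (-κ) ^ k * sin u := by
      gcongr
      exact exp_neg_mul_add_one_sq_le hκ.le (by linarith [k.cast_nonneg (α := ℝ)])
    _ = sin u * exp (-κ) * exp (-κ) ^ k := by ring

theorem exp_mul_squareWaveHeat_le_sin (hκ : 1 ≤ κ) (hu : 0 ≤ sin u) :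
    exp κ * squareWaveHeat κ u ≤ 2 * sin u := by
  have two_le_exp : 2 ≤ exp κ := by linarith [add_one_le_exp κ]
  calc exp κ * squareWaveHeat κ u ≤ exp κ * (sin u / (exp κ - 1)) := by
        gcongr
        exact squareWaveHeat_le_sin_div (by linarith) hu
    _ ≤ 2 * sin u := by
      rw [mul_div_assoc', div_le_iff₀ (by linarith)]
      nlinarith

theorem exp_mul_squareWaveHeat_le (hκ : 0 < κ) (hu : 0 ≤ sin u) :
    exp κ * squareWaveHeat κ u ≤ 2 * exp 1 := by
  rcases le_total κ 1 with h | h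
  · calc exp κ * squareWaveHeat κ u ≤ exp κ * 2 := by
          gcongr
          exact squareWaveHeat_le_two hκ hu
      _ ≤ exp 1 * 2 := by gcongr
      _ = 2 * exp 1 := mul_comm _ _
  · calc exp κ * squareWaveHeat κ u ≤ 2 * sin u := exp_mul_squareWaveHeat_le_sin h hu
      _ ≤ 2 * exp 1 := by
        gcongr
        exact (sin_le_one u).trans (one_le_exp zero_le_one)

end SquareWaveHeat

theorem hasSum_mul_intervalIntegral {ι : Type*} [Countable ι] {b : ι → ℝ} {φ : ι → ℝ → ℝ}
    (hb : Summable b) (hφ : ∀ i, Continuous (φ i)) (hφ₁ : ∀ i y, |φ i y| ≤ 1) (r s : ℝ) :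
    HasSum (fun i ↦ b i * ∫ y in r..s, φ i y) (∫ y in r..s, ∑' i, b i * φ i y) := by
  have norm_le (i : ι) (y : ℝ) : ‖b i * φ i y‖ ≤ |b i| := by
    rw [norm_mul]
    exact mul_le_of_le_one_right (abs_nonneg _) (hφ₁ i y)
  simp only [← intervalIntegral.integral_const_mul]
  exact intervalIntegral.hasSum_integral_of_dominated_convergence (fun i _ ↦ |b i|)
    (fun i ↦ (continuous_const.mul (hφ i)).aestronglyMeasurable)
    (fun i ↦ ae_of_all _ fun y _ ↦ norm_le i y) (ae_of_all _ fun _ _ ↦ hb.abs)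
    intervalIntegrable_const
    (ae_of_all _ fun y _ ↦ (hb.abs.of_norm_bounded fun i ↦ norm_le i y).hasSum)

theorem integral_sin_pi_mul_div {a : ℝ} (ha : a ≠ 0) (n : ℕ) :
    ∫ y in (0 : ℝ)..a, sin (π * (n + 1) * y / a) = a / (π * (n + 1)) * (1 + (-1) ^ n) := by
  have hω : π * (n + 1) / a ≠ 0 := by positivity
  have endpoint : π * (n + 1) / a * a = (n + 1 : ℕ) * π := by push_cast; field_simp
  simp only [mul_div_right_comm (π * (n + 1 : ℝ)) _ a]
  rw [intervalIntegral.integral_comp_mul_left (fun y ↦ sin y) hω, integral_sin, endpoint,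
    cos_nat_mul_pi]
  simp [pow_succ]

theorem hasSum_integral_pker_modes {a t : ℝ} (ha : a ≠ 0) (ht : 0 < t) (x : ℝ) :
    HasSum (fun n : ℕ ↦ exp (-(π ^ 2) * (n + 1) ^ 2 * t / (2 * a ^ 2)) *
        sin (π * (n + 1) * x / a) * (a / (π * (n + 1)) * (1 + (-1) ^ n)))
      (∫ y in (0 : ℝ)..a, ∑' n : ℕ, exp (-(π ^ 2) * (n + 1) ^ 2 * t / (2 * a ^ 2)) *
        sin (π * (n + 1) * x / a) * sin (π * (n + 1) * y / a)) := by
  have summable_coeff : Summable fun n : ℕ ↦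
      exp (-(π ^ 2) * (n + 1) ^ 2 * t / (2 * a ^ 2)) * sin (π * (n + 1) * x / a) := by
    have hκ : 0 < π ^ 2 * t / (2 * a ^ 2) := by positivity
    refine (summable_exp_neg_mul_add_one_sq hκ).of_norm_bounded fun n ↦ ?_
    rw [norm_mul, norm_of_nonneg (exp_pos _).le]
    refine (mul_le_of_le_one_right (exp_pos _).le (abs_sin_le_one _)).trans_eq ?_
    ring_nf
  simpa only [integral_sin_pi_mul_div ha] using
    hasSum_mul_intervalIntegral summable_coeff
      (φ := fun (n : ℕ) y ↦ sin (π * (n + 1) * y / a))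
      (fun n ↦ by fun_prop) (fun n y ↦ abs_sin_le_one _) 0 a

theorem integral_pker {a t : ℝ} (ha : a ≠ 0) (ht : 0 < t) (x : ℝ) :
    ∫ y in (0 : ℝ)..a, pker a t x y
      = 4 / π * squareWaveHeat (π ^ 2 * t / (2 * a ^ 2)) (π * x / a) := by
  have modes := hasSum_integral_pker_modes ha ht x
  rw [← (mul_right_injective₀ (two_ne_zero (α := ℕ))).hasSum_iff] at modes
  · simp only [pker, intervalIntegral.integral_const_mul]
    rw [← modes.tsum_eq, squareWaveHeat, ← tsum_mul_left, ← tsum_mul_left]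
    congr 1 with k
    have exponent : -(π ^ 2) * (2 * k + 1) ^ 2 * t / (2 * a ^ 2)
        = -(π ^ 2 * t / (2 * a ^ 2)) * (2 * k + 1) ^ 2 := by ring
    have phase : π * (2 * k + 1) * x / a = (2 * k + 1) * (π * x / a) := by ring
    simp only [Function.comp_apply, Nat.cast_mul, Nat.cast_ofNat, even_two.mul_right,
      Even.neg_pow, one_pow, exponent, phase]
    field_simp
    ring
  · intro n hn
    have hodd : Odd n := Nat.not_even_iff_odd.1 fun h ↦ hn (h.two_dvd.imp fun _ ↦ Eq.symm)
    simp [hodd.neg_one_pow]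

theorem integral_exp_mul_pker_mul_exp {a t : ℝ} (ha : a ≠ 0) (ht : 0 < t) (μ x : ℝ) :
    ∫ y in (0 : ℝ)..a,
        exp (μ * (x - y) + π ^ 2 * t / (2 * a ^ 2)) * pker a t x y * exp (μ * (y - a))
      = exp (μ * (x - a)) * (4 / π * (exp (π ^ 2 * t / (2 * a ^ 2)) *
          squareWaveHeat (π ^ 2 * t / (2 * a ^ 2)) (π * x / a))) := by
  rw [mul_left_comm (4 / π), ← integral_pker ha ht, ← mul_assoc,
    ← intervalIntegral.integral_const_mul]
  congr 1 with y
  rw [mul_right_comm, ← exp_add, ← exp_add]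
  ring_nf

theorem stmt14_general :
    ∃ C : ℝ, 0 < C ∧ ∀ a : ℝ, 0 < a → ∀ μ : ℝ, ∀ x ∈ Icc (0 : ℝ) a,
      (∀ t : ℝ, 0 < t →
        ∫ y in (0 : ℝ)..a,
            exp (μ * (x - y) + π ^ 2 * t / (2 * a ^ 2)) * pker a t x y * exp (μ * (y - a))
          ≤ C * exp (μ * (x - a))) ∧
      (∀ t : ℝ, a ^ 2 ≤ t →
        ∫ y in (0 : ℝ)..a,
            exp (μ * (x - y) + π ^ 2 * t / (2 * a ^ 2)) * pker a t x y * exp (μ * (y - a))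
          ≤ C * (a * exp (μ * (x - a)) * sin (π * x / a)) / a) := by
  refine ⟨4 / π * (2 * exp 1), by positivity, fun a ha μ x hx ↦ ?_⟩
  have hu : 0 ≤ sin (π * x / a) := sin_nonneg_of_nonneg_of_le_pi
    (div_nonneg (mul_nonneg pi_nonneg hx.1) ha.le)
    ((div_le_iff₀ ha).2 (mul_le_mul_of_nonneg_left hx.2 pi_nonneg))
  refine ⟨fun t ht ↦ ?_, fun t ht ↦ ?_⟩
  · rw [integral_exp_mul_pker_mul_exp ha.ne' ht, mul_comm]
    gcongr ?_ * _
    exact mul_le_mul_of_nonneg_left (exp_mul_squareWaveHeat_le (by positivity) hu) (by positivity)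
  · have hκ : 1 ≤ π ^ 2 * t / (2 * a ^ 2) := by
      rw [one_le_div (by positivity)]
      gcongr
      nlinarith [pi_gt_three]
    have ht₀ : 0 < t := lt_of_lt_of_le (by positivity) ht
    have large_time : 4 / π * (exp (π ^ 2 * t / (2 * a ^ 2)) *
        squareWaveHeat (π ^ 2 * t / (2 * a ^ 2)) (π * x / a))
        ≤ 4 / π * (2 * exp 1 * sin (π * x / a)) :=
      mul_le_mul_of_nonneg_left ((exp_mul_squareWaveHeat_le_sin hκ hu).trans
        (mul_le_mul_of_nonneg_right (by linarith [one_le_exp zero_le_one]) hu)) (by positivity)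
    rw [integral_exp_mul_pker_mul_exp ha.ne' ht₀]
    calc _ ≤ exp (μ * (x - a)) * (4 / π * (2 * exp 1 * sin (π * x / a))) :=
          mul_le_mul_of_nonneg_left large_time (exp_pos _).le
      _ = _ := by field_simp

/-- Bounds for `∫_0^a 𝔭_t(x,y)·w_Y(y) dy`: it is `≤ C·w_Y(x)` for all `t > 0`,
and `≤ C·w_Z(x)/a` for `t ≥ a²`. -/
theorem stmt14 :
    ∃ C : ℝ, 0 < C ∧ ∀ a : ℝ, π ≤ a → ∀ x ∈ Set.Icc (0:ℝ) a,
      (∀ t : ℝ, 0 < t → (∫ y in (0:ℝ)..a, pdens a t x y * wY a y) ≤ C * wY a x) ∧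
      (∀ t : ℝ, a^2 ≤ t → (∫ y in (0:ℝ)..a, pdens a t x y * wY a y) ≤ C * wZ a x / a) :=
  let ⟨C, hC, bounds⟩ := stmt14_general
  ⟨C, hC, fun a ha ↦ bounds a (pi_pos.trans_le ha) (muFn a)⟩
end
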